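/- arXiv:1305.5440 — 2 statements merged into one kernel-verified Lean document; each statement's English description precedes it below -/
import Mathlib

section
/- For every ε > 0 and every finite set J, there exist δ > 0 and T > 0 such that the following holds. Let V = (J, (V_j)_{j∈J}, r, H) be a hypergraph system and let g be a weighted hypergraph on V satisfying 0 ≤ g_e(x_e) ≤ 1 for all e ∈ H and x_e ∈ V_e, and E[∏_{e∈H} g_e(x_e) | x ∈ V_J] ≤ δ. Then for each e ∈ H there exists a set E'_e ⊆ V_e such that V_e ∖ E'_e has complexity at most T, ∏_{e∈H} 1_{E'_e}(x_e) = 0 for all x ∈ V_J, and E[g_e(x_e)·1_{V_e∖E'_e}(x_e) | x_e ∈ V_e] ≤ ε for all e ∈ H. -/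
open Finset

/-- The average (expectation with respect to the uniform measure) of `f` over `α`. -/
noncomputable def avg {α : Type*} [Fintype α] (f : α → ℝ) : ℝ :=
  (∑ x, f x) / (Fintype.card α)

variable {J : Type} [Fintype J] [DecidableEq J] {V : J → Type}

/-- Restriction (projection) of a full tuple `x ∈ V_J` to the coordinates in `e`. -/
def restr (e : Finset J) (x : (j : J) → V j) : (i : ↥e) → V i := fun i => x i.1

/-- Projection of a tuple indexed by `e` to the coordinates in the face `e.erase j`. -/
def faceProj {e : Finset J} (j : J) (x : (i : ↥e) → V i) :
    (i : ↥(e.erase j)) → V i :=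
  fun i => x ⟨i.1, Finset.mem_of_mem_erase i.2⟩

/-- The product `∏_{f ∈ ∂e} 1_{B_f}(x_f)` of the indicators of the sets `B_f ⊆ V_f`
over the faces `f = e.erase j`, `j ∈ e`, of `e`. -/
noncomputable def faceInd (e : Finset J)
    (B : (j : J) → Set ((i : ↥(e.erase j)) → V i)) (x : (i : ↥e) → V i) : ℝ :=
  ∏ j ∈ e, Set.indicator (B j) (fun _ => (1 : ℝ)) (faceProj j x)

/-- `(g, g')` is an `ε`-discrepancy pair on the edge `e`: for all choices of
`B_f ⊆ V_f` (`f ∈ ∂e`), `|E[(g(x_e) - g'(x_e)) ∏_{f ∈ ∂e} 1_{B_f}(x_f)]| ≤ ε`. -/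
noncomputable def EdgeDiscrepancy [∀ j, Fintype (V j)] (e : Finset J)
    (g g' : ((i : ↥e) → V i) → ℝ) (ε : ℝ) : Prop :=
  ∀ B : (j : J) → Set ((i : ↥(e.erase j)) → V i),
    |avg (fun x : (i : ↥e) → V i => (g x - g' x) * faceInd e B x)| ≤ ε

/-- `g` is upper `η`-regular on the edge `e`: for all choices of `B_f ⊆ V_f`
(`f ∈ ∂e`), `E[(g(x_e) - 1) ∏_{f ∈ ∂e} 1_{B_f}(x_f)] ≤ η`. -/
noncomputable def EdgeUpperRegular [∀ j, Fintype (V j)] (e : Finset J)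
    (g : ((i : ↥e) → V i) → ℝ) (η : ℝ) : Prop :=
  ∀ B : (j : J) → Set ((i : ↥(e.erase j)) → V i),
    avg (fun x : (i : ↥e) → V i => (g x - 1) * faceInd e B x) ≤ η

/-- `E ⊆ V_e` is the set of `r`-cliques of some `(r-1)`-uniform hypergraph: there are
sets `B_f ⊆ V_f` for the faces `f ∈ ∂e` with `1_E(x_e) = ∏_{f ∈ ∂e} 1_{B_f}(x_f)`. -/
def IsCliqueSet (e : Finset J) (E : Set ((i : ↥e) → V i)) : Prop :=
  ∃ B : (j : J) → Set ((i : ↥(e.erase j)) → V i),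
    ∀ x, x ∈ E ↔ ∀ j ∈ e, faceProj j x ∈ B j

/-- `E ⊆ V_e` has complexity at most `T`: it can be partitioned into `T` (possibly
empty) clique sets. -/
def ComplexityLE (e : Finset J) (E : Set ((i : ↥e) → V i)) (T : ℕ) : Prop :=
  ∃ P : Fin T → Set ((i : ↥e) → V i),
    (∀ i, IsCliqueSet e (P i)) ∧
    (∀ i₁ i₂, i₁ ≠ i₂ → P i₁ ∩ P i₂ = ∅) ∧
    (⋃ i, P i) = E

/-- The weighted hypergraph `ν` satisfies the `H`-linear forms condition within `η`:
for every choice of exponents `n (e, ω) ∈ {0,1}` (`e ∈ H`, `ω ∈ {0,1}^e`),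
`|E[∏_{e ∈ H} ∏_{ω ∈ {0,1}^e} ν_e(x_e^{(ω)})^{n_{e,ω}} | x⁰, x¹ ∈ V_J] - 1| ≤ η`. -/
noncomputable def HLinearForms [∀ j, Fintype (V j)] (H : Finset (Finset J))
    (ν : (e : Finset J) → ((i : ↥e) → V i) → ℝ) (η : ℝ) : Prop :=
  ∀ n : (e : Finset J) → (↥e → Bool) → Bool,
    |avg (fun x : ((j : J) → V j) × ((j : J) → V j) =>
      ∏ e ∈ H, ∏ ω : ↥e → Bool,
        if n e ω then ν e (fun i => if ω i then x.2 i.1 else x.1 i.1) else 1) - 1| ≤ η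

/-!
The theorem is proved by contradiction and compactness. If it failed for `ε` and an edge set `H`,
there would be weighted hypergraphs `g n` on vertex systems `W n` whose `H`-counts tend to zero, but
which have no removal of error `ε` and complexity `n`. Their ultraproduct along a nonprincipal
ultrafilter carries a Loeb measure, the extension of the limiting counting density of internal sets,
and the threshold sets `{g n e ≥ ε / 2}` become events `E e` with `⋂ e ∈ H, E e` null.

For a family `F` of subsets of `J`, consider the Boolean algebra and the σ-algebra generated by the
internal sets that depend only on the coordinates in some `f ∈ F`. The structural input is
conditional independence: given the information in the traces `f ∩ e`, `f ∈ F`, an event depending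
only on `e` is independent of the σ-algebra of `F`. It holds because an average over all of `V_J` is
dominated by an average over a slice with the coordinates outside `e` frozen. Consequently the
`E e`, with `|e| = k + 1`, may be replaced by the supports of their conditional probabilities given
the information of order `k`, which contain the `E e` up to null sets and still have null
intersection.

It remains to treat events `E e` of order `k` inside `e` with null intersection. They are covered,
up to small measure, by members of the Boolean algebra of order `k` with empty intersection, by
induction on `k`. In the step to `k + 1`, approximate `E e` by a Boolean combination of generators
and cut the space into the cells of the generators of order exactly `k + 1`. For each system of
cells, the points at which the cell is, conditionally on order `k`, almost contained in `E e` form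
sets of order `k` with null intersection, so the induction hypothesis applies to them, whereas the
remaining part of the cells has small measure.

Finally, a member of the Boolean algebra of order `k` in `e` is internal, given at each level `n` by
a fixed Boolean combination of sets depending on fewer than `|e|` coordinates of `e`; such a
combination has complexity bounded independently of `n`. Emptiness of an internal set and a strict
bound on its measure both hold at almost every level `n`, a contradiction.
-/

namespace HypergraphRemoval

open MeasureTheory Filter Topology ENNReal
open scoped ProbabilityTheory

/-! ### Boolean combinations of sets -/

section BooleanCombinations

variable {ι κ Ω : Type*}

/-- The Boolean combination of the sets `S i` with truth table `Φ`. -/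
def boolComb (Φ : (ι → Prop) → Prop) (S : ι → Set Ω) : Set Ω := {ω | Φ fun i => ω ∈ S i}

/-- The cell cut out by the sets `S i`, `i ∈ P`, on which `a i` says whether `S i` holds; the values
of `a` off `P` play no role, so that cells for varying `P` can share one pattern `a`. -/
def cell (S : ι → Set Ω) (a : ι → Prop) (P : Set ι) : Set Ω := {ω | ∀ i ∈ P, (ω ∈ S i ↔ a i)}

lemma mem_cell_self (S : ι → Set Ω) (P : Set ι) (ω : Ω) : ω ∈ cell S (fun i => ω ∈ S i) P :=
  fun _ _ => Iff.rfl

lemma boolComb_eq_iUnion_cell (Φ : (ι → Prop) → Prop) (S : ι → Set Ω) :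
    boolComb Φ S = ⋃ a ∈ {a | Φ a}, cell S a Set.univ := by
  ext ω
  simp only [boolComb, cell, Set.mem_iUnion, Set.mem_ofPred_eq, exists_prop]
  refine ⟨fun h => ⟨_, h, fun i _ => Iff.rfl⟩, ?_⟩
  rintro ⟨a, ha, hω⟩
  rwa [show (fun i => ω ∈ S i) = a from funext fun i => propext (hω i trivial)]

lemma cell_iUnion (S : ι → Set Ω) (a : ι → Prop) (T : Finset κ) (P : κ → Set ι) :
    cell S a (⋃ k ∈ T, P k) = ⋂ k ∈ T, cell S a (P k) := by
  ext ω
  simp only [cell, Set.mem_iUnion, Set.mem_iInter, Set.mem_ofPred_eq]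
  exact ⟨fun h k hk i hi => h i ⟨k, hk, hi⟩, fun h i ⟨k, hk, hi⟩ => h k hk i hi⟩

lemma cell_disjoint_of_ne {S : ι → Set Ω} {a b : ι → Prop} {P : Set ι}
    (h : cell S a P ≠ cell S b P) : Disjoint (cell S a P) (cell S b P) := by
  refine Set.disjoint_left.2 fun ω ha hb => h (Set.ext fun ω' => ?_)
  refine forall₂_congr fun i hi => ?_
  rw [← ha i hi, ← hb i hi]

lemma cell_inter_boolComb [DecidablePred (· ∈ (P : Set ι))] (S : ι → Set Ω) (a : ι → Prop)
    (j : κ → ι) (Φ : (κ → Prop) → Prop) :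
    cell S a P ∩ boolComb Φ (fun i => S (j i)) =
      cell S a P ∩ boolComb Φ (fun i => if j i ∈ P then {_ω | a (j i)} else S (j i)) := by
  ext ω
  refine and_congr_right fun hω => iff_of_eq (congrArg Φ (funext fun i => ?_))
  by_cases hi : j i ∈ P
  · simpa only [if_pos hi, Set.mem_ofPred_eq] using propext (hω _ hi)
  · simp only [if_neg hi]

variable {𝒜 : Set (Set Ω)}

lemma setOf_const_mem (h𝒜 : IsSetAlgebra 𝒜) (p : Prop) : {_ω : Ω | p} ∈ 𝒜 := by
  by_cases hp : p
  · simpa [hp] using h𝒜.univ_mem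
  · simpa [hp] using h𝒜.empty_mem

lemma cell_mem [Finite ι] (h𝒜 : IsSetAlgebra 𝒜) {S : ι → Set Ω} {P : Set ι}
    (hS : ∀ i ∈ P, S i ∈ 𝒜) {a : ι → Prop} : cell S a P ∈ 𝒜 := by
  classical
  have h : cell S a P = ⋂ i ∈ P.toFinite.toFinset, if a i then S i else (S i)ᶜ := by
    ext ω
    simp only [cell, Set.mem_ofPred_eq, Set.mem_iInter, Set.Finite.mem_toFinset]
    refine forall₂_congr fun i _ => ?_
    split_ifs with hi <;> simp [hi]
  rw [h]
  refine h𝒜.biInter_mem _ fun i hi => ?_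
  have hSi := hS i (P.toFinite.mem_toFinset.1 hi)
  split_ifs
  exacts [hSi, h𝒜.compl_mem hSi]

lemma boolComb_mem [Finite ι] (h𝒜 : IsSetAlgebra 𝒜) {S : ι → Set Ω} (hS : ∀ i, S i ∈ 𝒜)
    {Φ : (ι → Prop) → Prop} : boolComb Φ S ∈ 𝒜 := by
  have h := h𝒜.biUnion_mem (s := fun a => cell S a Set.univ) (Set.toFinite {a | Φ a}).toFinset
    fun a _ => cell_mem h𝒜 fun i _ => hS i
  simpa only [boolComb_eq_iUnion_cell, Set.Finite.mem_toFinset] using h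

lemma exists_boolComb_of_mem_generateSetAlgebra {s : Set Ω} (hs : s ∈ generateSetAlgebra 𝒜) :
    ∃ (I : Type) (_ : Finite I) (S : I → Set Ω) (Φ : (I → Prop) → Prop),
      (∀ i, S i ∈ 𝒜) ∧ s = boolComb Φ S := by
  induction hs with
  | base s hs => exact ⟨Unit, inferInstance, fun _ => s, fun p => p (), fun _ => hs, rfl⟩
  | empty =>
    exact ⟨Empty, inferInstance, fun i => i.elim, fun _ => False, fun i => i.elim, rfl⟩
  | compl s _ ih =>
    obtain ⟨I, hI, S, Φ, hS, rfl⟩ := ih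
    exact ⟨I, hI, S, fun p => ¬ Φ p, hS, rfl⟩
  | union s t _ _ ihs iht =>
    obtain ⟨I, hI, S, Φ, hS, rfl⟩ := ihs
    obtain ⟨I', hI', S', Φ', hS', rfl⟩ := iht
    exact ⟨I ⊕ I', inferInstance, Sum.elim S S',
      fun p => Φ (fun i => p (.inl i)) ∨ Φ' (fun i => p (.inr i)), Sum.rec hS hS', rfl⟩

end BooleanCombinations

/-! ### Indexed families of generators -/

section Families

variable {κ Ω : Type*} (𝒜 : κ → Set (Set Ω))

/-- The algebra of sets generated by the families `𝒜 f`, `f ∈ F`. -/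
def algOn (F : Set κ) : Set (Set Ω) := generateSetAlgebra (⋃ f ∈ F, 𝒜 f)

/-- The σ-algebra generated by the families `𝒜 f`, `f ∈ F`. -/
@[reducible] def sigmaOn (F : Set κ) : MeasurableSpace Ω :=
  MeasurableSpace.generateFrom (⋃ f ∈ F, 𝒜 f)

variable {𝒜} {F G : Set κ}

lemma isSetAlgebra_algOn : IsSetAlgebra (algOn 𝒜 F) := isSetAlgebra_generateSetAlgebra

lemma sigmaOn_eq_generateFrom_algOn : sigmaOn 𝒜 F = .generateFrom (algOn 𝒜 F) :=
  generateFrom_generateSetAlgebra_eq.symm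

lemma mem_algOn_of_mem {f : κ} (hf : f ∈ F) {s : Set Ω} (hs : s ∈ 𝒜 f) : s ∈ algOn 𝒜 F :=
  self_subset_generateSetAlgebra (Set.mem_biUnion hf hs)

lemma measurableSet_of_mem_algOn {s : Set Ω} (hs : s ∈ algOn 𝒜 F) : MeasurableSet[sigmaOn 𝒜 F] s :=
  sigmaOn_eq_generateFrom_algOn (𝒜 := 𝒜) ▸ MeasurableSpace.measurableSet_generateFrom hs

lemma sigmaOn_le {m : MeasurableSpace Ω} (h : ∀ f ∈ F, ∀ s ∈ 𝒜 f, MeasurableSet s) :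
    sigmaOn 𝒜 F ≤ m :=
  MeasurableSpace.generateFrom_le fun s hs => by
    obtain ⟨f, hf, hs⟩ := Set.mem_iUnion₂.1 hs
    exact h f hf s hs

lemma exists_common_generators.{u} {τ : Type u} {F : τ → Set κ} {H : Finset τ} {E : τ → Set Ω}
    (hE : ∀ e ∈ H, E e ∈ algOn 𝒜 (F e)) :
    ∃ (K : Type u) (_ : Finite K) (face : K → κ) (S : K → Set Ω), (∀ i, S i ∈ 𝒜 (face i)) ∧
      ∀ e ∈ H, ∃ Φ, E e = boolComb Φ fun i : {i // face i ∈ F e} => S i := by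
  choose I hI S Φ hS hES using fun e : H => exists_boolComb_of_mem_generateSetAlgebra (hE e e.2)
  simp only [Set.mem_iUnion, exists_prop] at hS
  choose face hface hS using hS
  exact ⟨Σ e : H, I e, inferInstance, fun i => face i.1 i.2, fun i => S i.1 i.2,
    fun i => hS i.1 i.2, fun e he => ⟨fun p => Φ ⟨e, he⟩ fun i =>
      p ⟨⟨⟨e, he⟩, i⟩, hface ⟨e, he⟩ i⟩, hES ⟨e, he⟩⟩⟩

variable [Preorder κ]

lemma biUnion_subset_biUnion_of_forall_exists_le (h𝒜 : Monotone 𝒜)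
    (h : ∀ f ∈ F, ∃ g ∈ G, f ≤ g) : ⋃ f ∈ F, 𝒜 f ⊆ ⋃ g ∈ G, 𝒜 g :=
  Set.iUnion₂_subset fun f hf =>
    let ⟨_, hg, hfg⟩ := h f hf
    (h𝒜 hfg).trans (Set.subset_biUnion_of_mem hg)

lemma algOn_mono (h𝒜 : Monotone 𝒜) (h : ∀ f ∈ F, ∃ g ∈ G, f ≤ g) : algOn 𝒜 F ⊆ algOn 𝒜 G :=
  generateSetAlgebra_mono (biUnion_subset_biUnion_of_forall_exists_le h𝒜 h)

lemma sigmaOn_mono (h𝒜 : Monotone 𝒜) (h : ∀ f ∈ F, ∃ g ∈ G, f ≤ g) :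
    sigmaOn 𝒜 F ≤ sigmaOn 𝒜 G :=
  MeasurableSpace.generateFrom_mono (biUnion_subset_biUnion_of_forall_exists_le h𝒜 h)

end Families

/-! ### Approximation by an algebra of sets -/

section Approximation

variable {Ω : Type*} {m m0 : MeasurableSpace Ω} {μ : Measure Ω} {𝒜 : Set (Set Ω)}

lemma measureDense_trim [IsFiniteMeasure μ] (h𝒜 : IsSetAlgebra 𝒜) (hm : m ≤ m0)
    (hgen : m = .generateFrom 𝒜) : @Measure.MeasureDense Ω m (μ.trim hm) 𝒜 :=
  @Measure.MeasureDense.of_generateFrom_isSetAlgebra_finite Ω m (μ.trim hm) 𝒜 _ h𝒜 hgen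

lemma exists_mem_measureReal_symmDiff_lt [IsFiniteMeasure μ] (h𝒜 : IsSetAlgebra 𝒜) (hm : m ≤ m0)
    (hgen : m = .generateFrom 𝒜) {s : Set Ω} (hs : MeasurableSet[m] s) {ε : ℝ} (hε : 0 < ε) :
    ∃ t ∈ 𝒜, μ.real (symmDiff s t) < ε := by
  have hdense := measureDense_trim (μ := μ) h𝒜 hm hgen
  obtain ⟨t, ht, hst⟩ := @Measure.MeasureDense.approx Ω m _ _ hdense s hs
    (@measure_ne_top Ω m _ _ s) ε hε
  have ht' : MeasurableSet[m] t := @Measure.MeasureDense.measurable Ω m _ _ hdense t ht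
  rw [trim_measurableSet_eq hm (hs.symmDiff ht')] at hst
  exact ⟨t, ht, (ENNReal.lt_ofReal_iff_toReal_lt (measure_ne_top _ _)).1 hst⟩

/-- The finite linear combinations of indicators of members of `𝒜`. -/
def simpleSpan (𝒜 : Set (Set Ω)) : Submodule ℝ (Ω → ℝ) :=
  Submodule.span ℝ ((fun s => s.indicator fun _ => 1) '' 𝒜)

lemma exists_eq_sum_of_mem_simpleSpan {ψ : Ω → ℝ} (hψ : ψ ∈ simpleSpan 𝒜) :
    ∃ (n : ℕ) (w : Fin n → ℝ) (P : Fin n → Set Ω),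
      (∀ i, P i ∈ 𝒜) ∧ ψ = ∑ i, w i • (P i).indicator fun _ => 1 := by
  obtain ⟨n, w, p, rfl⟩ := Submodule.mem_span_set'.1 hψ
  choose P hP hPp using fun i => (p i).2
  exact ⟨n, w, P, hP, Finset.sum_congr rfl fun i _ => by rw [← hPp]⟩

lemma measurable_of_mem_simpleSpan (h𝒜 : ∀ s ∈ 𝒜, MeasurableSet[m] s) {ψ : Ω → ℝ}
    (hψ : ψ ∈ simpleSpan 𝒜) : Measurable[m] ψ := by
  obtain ⟨n, w, P, hP, rfl⟩ := exists_eq_sum_of_mem_simpleSpan hψ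
  simp only [Finset.sum_fn]
  exact Finset.measurable_sum _ fun i _ =>
    ((measurable_const (a := (1 : ℝ))).indicator (h𝒜 _ (hP i))).const_smul (w i)

lemma exists_mem_simpleSpan_eLpNorm_sub_le (h𝒜 : μ.MeasureDense 𝒜) {φ : Ω → ℝ}
    (hφ : MemLp φ 1 μ) {ε : ℝ≥0∞} (hε : ε ≠ 0) :
    ∃ ψ, eLpNorm (φ - ψ) 1 μ ≤ ε ∧ ψ ∈ simpleSpan 𝒜 := by
  refine hφ.induction_dense one_ne_top _ (fun c s hs hμs ε hε => ?_)
    (fun _ _ => add_mem)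
    (fun ψ hψ => (measurable_of_mem_simpleSpan h𝒜.measurable hψ).aestronglyMeasurable) hε
  obtain ⟨η, hη, hsmall⟩ := exists_eLpNorm_indicator_le (μ := μ) one_ne_top c hε
  obtain ⟨t, ht, hst⟩ := h𝒜.approx s hs hμs.ne η hη
  refine ⟨t.indicator fun _ => c, ?_, ?_⟩
  · rw [eLpNorm_indicator_sub_indicator, symmDiff_comm]
    exact hsmall _ (by simpa using hst.le)
  · have h := (simpleSpan 𝒜).smul_mem c (Submodule.subset_span (Set.mem_image_of_mem _ ht))
    convert h using 1
    ext ω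
    by_cases hω : ω ∈ t <;> simp [hω]

lemma exists_mem_simpleSpan_integral_abs_sub_le [IsFiniteMeasure μ] (h𝒜 : IsSetAlgebra 𝒜)
    (hm : m ≤ m0) (hgen : m = .generateFrom 𝒜) {φ : Ω → ℝ} (hφ : StronglyMeasurable[m] φ)
    (hφi : Integrable φ μ) {ε : ℝ} (hε : 0 < ε) :
    ∃ ψ ∈ simpleSpan 𝒜, ∫ ω, |φ ω - ψ ω| ∂μ ≤ ε := by
  have hdense := measureDense_trim (μ := μ) h𝒜 hm hgen
  obtain ⟨ψ, hφψ, hψ⟩ := @exists_mem_simpleSpan_eLpNorm_sub_le Ω m _ _ hdense φ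
    (memLp_one_iff_integrable.2 (hφi.trim hm hφ)) _ (ENNReal.ofReal_pos.2 hε).ne'
  have hψm : StronglyMeasurable[m] ψ := (measurable_of_mem_simpleSpan
    (fun s => @Measure.MeasureDense.measurable Ω m _ _ hdense s) hψ).stronglyMeasurable
  have hsub : StronglyMeasurable[m] (φ - ψ) := hφ.sub hψm
  rw [eLpNorm_trim hm hsub, eLpNorm_one_eq_lintegral_enorm] at hφψ
  refine ⟨ψ, hψ, ?_⟩
  calc ∫ ω, |φ ω - ψ ω| ∂μ = (∫⁻ ω, ‖(φ - ψ) ω‖ₑ ∂μ).toReal :=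
        integral_norm_eq_lintegral_enorm (hsub.mono hm).aestronglyMeasurable
    _ ≤ ε := ENNReal.toReal_le_of_le_ofReal hε.le hφψ

end Approximation

section Integrals

variable {Ω : Type*} [MeasurableSpace Ω] {μ : Measure Ω}

lemma setIntegral_indicator_one {A C : Set Ω} (hA : MeasurableSet A) :
    ∫ ω in C, A.indicator (fun _ => (1 : ℝ)) ω ∂μ = μ.real (A ∩ C) := by
  rw [integral_indicator hA, setIntegral_const, measureReal_restrict_apply hA, smul_eq_mul, mul_one]

lemma abs_setIntegral_sub_le {φ ψ : Ω → ℝ} (hφ : Integrable φ μ) (hψ : Integrable ψ μ)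
    (C : Set Ω) : |∫ ω in C, φ ω ∂μ - ∫ ω in C, ψ ω ∂μ| ≤ ∫ ω, |φ ω - ψ ω| ∂μ := by
  rw [← integral_sub hφ.integrableOn hψ.integrableOn]
  exact abs_integral_le_integral_abs.trans
    (setIntegral_le_integral (hφ.sub hψ).abs (.of_forall fun ω => abs_nonneg _))

lemma setIntegral_eq_zero_of_forall_mem {𝒜 : Set (Set Ω)} (h𝒜 : IsSetAlgebra 𝒜)
    (hmeas : ∀ s ∈ 𝒜, MeasurableSet s) {φ : Ω → ℝ} (hφ : Integrable φ μ)
    (h : ∀ s ∈ 𝒜, ∫ ω in s, φ ω ∂μ = 0) {C : Set Ω} (hC : MeasurableSet[.generateFrom 𝒜] C) :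
    ∫ ω in C, φ ω ∂μ = 0 := by
  have hle : MeasurableSpace.generateFrom 𝒜 ≤ _ := MeasurableSpace.generateFrom_le hmeas
  have huniv : ∫ ω, φ ω ∂μ = 0 := by simpa using h _ h𝒜.univ_mem
  induction C, hC using MeasurableSpace.induction_on_inter rfl
    h𝒜.isSetRing.isSetSemiring.isPiSystem with
  | empty => simp
  | basic t ht => exact h t ht
  | compl t ht ih => linarith [integral_add_compl (hle _ ht) hφ]
  | iUnion g hd hg ih =>
    simp [integral_iUnion (fun i => hle _ (hg i)) hd hφ.integrableOn, ih]

variable [IsFiniteMeasure μ]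

lemma integrable_indicator_one {A : Set Ω} (hA : MeasurableSet A) :
    Integrable (A.indicator fun _ => (1 : ℝ)) μ := (integrable_const 1).indicator hA

lemma integrable_of_mem_simpleSpan {𝒜 : Set (Set Ω)} (h𝒜 : ∀ s ∈ 𝒜, MeasurableSet s) {ψ : Ω → ℝ}
    (hψ : ψ ∈ simpleSpan 𝒜) : Integrable ψ μ := by
  obtain ⟨n, w, P, hP, rfl⟩ := exists_eq_sum_of_mem_simpleSpan hψ
  exact integrable_finsetSum' _ fun i _ => (integrable_indicator_one (h𝒜 _ (hP i))).smul _

lemma setIntegral_sum_indicator {n : ℕ} (w : Fin n → ℝ) {P : Fin n → Set Ω}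
    (hP : ∀ i, MeasurableSet (P i)) (C : Set Ω) :
    ∫ ω in C, (∑ i, w i • (P i).indicator (fun _ => (1 : ℝ))) ω ∂μ =
      ∑ i, w i * μ.real (P i ∩ C) := by
  simp only [Finset.sum_apply, Pi.smul_apply, smul_eq_mul]
  rw [integral_finsetSum _ fun i _ => ((integrable_indicator_one (hP i)).const_mul _).integrableOn]
  simp only [integral_const_mul, setIntegral_indicator_one (hP _)]

end Integrals

/-! ### Conditional probabilities -/

section CondProb

variable {Ω : Type*} {m m0 : MeasurableSpace Ω} {μ : Measure Ω}

lemma condProb_nonneg (A : Set Ω) : ∀ᵐ ω ∂μ, 0 ≤ (μ⟦A | m⟧) ω :=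
  condExp_nonneg (.of_forall fun _ => Set.indicator_nonneg (fun _ _ => zero_le_one) _)

lemma measurableSet_condProb_pos (A : Set Ω) : MeasurableSet[m] {ω | 0 < (μ⟦A | m⟧) ω} :=
  measurableSet_lt measurable_const stronglyMeasurable_condExp.measurable

lemma measure_inter_pos_eq_zero {φ : Ω → ℝ} (hφ : Integrable φ μ) (h0 : ∀ᵐ ω ∂μ, 0 ≤ φ ω)
    {C : Set Ω} (hC : MeasurableSet C) (h : ∫ ω in C, φ ω ∂μ ≤ 0) :
    μ (C ∩ {ω | 0 < φ ω}) = 0 := by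
  have h0C : 0 ≤ᵐ[μ.restrict C] φ := ae_restrict_of_ae h0
  have hint := le_antisymm h (integral_nonneg_of_ae h0C)
  rw [setIntegral_eq_zero_iff_of_nonneg_ae h0C hφ.integrableOn] at hint
  refine measure_mono_null ?_ (ae_iff.1 ((ae_restrict_iff' hC).1 hint))
  rintro ω ⟨hω, hpos⟩ hzero
  exact hpos.ne' (hzero hω)

variable [IsFiniteMeasure μ]

lemma setIntegral_condProb (hm : m ≤ m0) {A C : Set Ω} (hA : MeasurableSet A)
    (hC : MeasurableSet[m] C) : ∫ ω in C, (μ⟦A | m⟧) ω ∂μ = μ.real (A ∩ C) := by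
  rw [setIntegral_condExp hm (integrable_indicator_one hA) hC, setIntegral_indicator_one hA]

lemma measure_inter_condProb_pos_compl (hm : m ≤ m0) {A : Set Ω} (hA : MeasurableSet A) :
    μ (A ∩ {ω | 0 < (μ⟦A | m⟧) ω}ᶜ) = 0 := by
  have hZ : MeasurableSet[m] {ω | 0 < (μ⟦A | m⟧) ω}ᶜ := (measurableSet_condProb_pos A).compl
  rw [← measureReal_eq_zero_iff]
  refine le_antisymm ?_ measureReal_nonneg
  rw [← setIntegral_condProb hm hA hZ]
  exact setIntegral_nonpos (hm _ hZ) fun ω hω => not_lt.1 hω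

lemma measure_eq_zero_of_forall_diff_le {κ : Type*} {H : Finset κ}
    {E : κ → Set Ω} (hE : μ (⋂ e ∈ H, E e) = 0) {c : ℝ} (hcH : c * #H < 1) {D : Set Ω}
    (hD : ∀ e ∈ H, μ.real (D \ E e) ≤ c * μ.real D) : μ D = 0 := by
  have hcover : D ⊆ (⋂ e ∈ H, E e) ∪ ⋃ e ∈ H, D \ E e := by
    intro ω hω
    by_cases h : ∀ e ∈ H, ω ∈ E e
    · exact .inl (Set.mem_iInter₂.2 h)
    · push Not at h
      obtain ⟨e, he, h⟩ := h
      exact .inr (Set.mem_iUnion₂.2 ⟨e, he, hω, h⟩)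
  have hle : μ.real D ≤ #H * (c * μ.real D) := calc
    μ.real D ≤ μ.real (⋂ e ∈ H, E e) + μ.real (⋃ e ∈ H, D \ E e) :=
      (measureReal_mono hcover).trans (measureReal_union_le _ _)
    _ = μ.real (⋃ e ∈ H, D \ E e) := by rw [measureReal_def, hE, ENNReal.toReal_zero, zero_add]
    _ ≤ ∑ e ∈ H, μ.real (D \ E e) := measureReal_biUnion_finset_le _ _
    _ ≤ #H * (c * μ.real D) := by
      simpa only [nsmul_eq_mul] using Finset.sum_le_card_nsmul H _ _ hD
  rw [← measureReal_eq_zero_iff]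
  nlinarith [measureReal_nonneg (μ := μ) (s := D)]

end CondProb

section Core

variable {Ω : Type*} {m m0 : MeasurableSpace Ω} {μ : Measure Ω} {c : ℝ} {A E D : Set Ω}

/-- The core of a cell `A` with respect to `E`: the points at which, conditionally on `m`, a
proportion less than `c` of `A` lies outside `E`. -/
def core (μ : Measure Ω) (m : MeasurableSpace Ω) (c : ℝ) (E A : Set Ω) : Set Ω :=
  {ω | (μ⟦A \ E | m⟧) ω < c * (μ⟦A | m⟧) ω}

lemma measurableSet_core : MeasurableSet[m] (core μ m c E A) :=
  measurableSet_lt stronglyMeasurable_condExp.measurable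
    (stronglyMeasurable_condExp.measurable.const_mul c)

lemma measureReal_diff_inter_le_of_subset_core (hD : MeasurableSet D) (hDcore : D ⊆ core μ m c E A)
    (hA : ∫ ω in D, (μ⟦A | m⟧) ω ∂μ = μ.real (A ∩ D))
    (hAE : ∫ ω in D, (μ⟦A \ E | m⟧) ω ∂μ = μ.real ((A \ E) ∩ D)) :
    μ.real ((A \ E) ∩ D) ≤ c * μ.real (A ∩ D) := by
  rw [← hA, ← hAE, ← integral_const_mul]
  exact setIntegral_mono_on integrable_condExp.integrableOn
    (integrable_condExp.const_mul c).integrableOn hD fun ω hω => (hDcore hω).le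

variable [IsFiniteMeasure μ]

lemma measure_core_inter_eq_zero (hm : m ≤ m0) (hc : 0 < c) (hA : MeasurableSet A) {Z : Set Ω}
    (hZ : MeasurableSet[m] Z) (hAZ : μ (A ∩ Z) = 0) : μ (core μ m c E A ∩ Z) = 0 := by
  have hint : ∫ ω in Z, (μ⟦A | m⟧) ω ∂μ ≤ 0 := by
    rw [setIntegral_condProb hm hA hZ, measureReal_def, hAZ, ENNReal.toReal_zero]
  have hpos := measure_inter_pos_eq_zero integrable_condExp (condProb_nonneg A) (hm _ hZ) hint
  refine measure_mono_null ?_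
    (measure_union_null hpos (ae_iff.1 (condProb_nonneg (m := m) (A \ E))))
  rintro ω ⟨hcore, hωZ⟩
  by_cases h0 : 0 ≤ (μ⟦A \ E | m⟧) ω
  · exact .inl ⟨hωZ, pos_of_mul_pos_right (h0.trans_lt hcore) hc.le⟩
  · exact .inr h0

lemma measureReal_inter_le_of_subset_compl_core (hm : m ≤ m0) (hc : 0 < c) (hA : MeasurableSet A)
    (hE : MeasurableSet E) (hD : MeasurableSet[m] D) (hDcore : D ⊆ (core μ m c E A)ᶜ) :
    μ.real (A ∩ D) ≤ c⁻¹ * μ.real ((A \ E) ∩ D) := by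
  rw [inv_mul_eq_div, le_div_iff₀' hc, ← setIntegral_condProb hm hA hD,
    ← setIntegral_condProb hm (hA.diff hE) hD, ← integral_const_mul]
  exact setIntegral_mono_on (integrable_condExp.const_mul c).integrableOn
    integrable_condExp.integrableOn (hm _ hD) fun ω hω => not_lt.1 (hDcore hω)

lemma measureReal_biUnion_off_core_le (hm : m ≤ m0) (hc : 0 < c) {Q : Finset (Set Ω)}
    (hQ : ∀ A ∈ Q, MeasurableSet A) (hdisj : (Q : Set (Set Ω)).PairwiseDisjoint id)
    (hE : MeasurableSet E) {F : Set Ω} (hF : MeasurableSet F)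
    (hG : ∀ A ∈ Q, ∃ G, MeasurableSet[m] G ∧ A ∩ F = A ∩ G) :
    μ.real (⋃ A ∈ Q, A ∩ ((core μ m c E A)ᶜ ∩ F)) ≤ c⁻¹ * μ.real (F \ E) := by
  have hcell : ∀ A ∈ Q,
      μ.real (A ∩ ((core μ m c E A)ᶜ ∩ F)) ≤ c⁻¹ * μ.real (A ∩ (F \ E)) := by
    intro A hA
    obtain ⟨G, hGm, hGF⟩ := hG A hA
    calc μ.real (A ∩ ((core μ m c E A)ᶜ ∩ F)) = μ.real (A ∩ ((core μ m c E A)ᶜ ∩ G)) := by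
          rw [Set.inter_left_comm, hGF, Set.inter_left_comm]
      _ ≤ c⁻¹ * μ.real ((A \ E) ∩ ((core μ m c E A)ᶜ ∩ G)) :=
          measureReal_inter_le_of_subset_compl_core hm hc (hQ A hA) hE
            (measurableSet_core.compl.inter hGm) Set.inter_subset_left
      _ ≤ c⁻¹ * μ.real (A ∩ (F \ E)) := by
          refine mul_le_mul_of_nonneg_left (measureReal_mono ?_) (inv_nonneg.2 hc.le)
          rintro ω ⟨⟨hωA, hωE⟩, -, hωG⟩
          exact ⟨hωA, (hGF.symm.subset ⟨hωA, hωG⟩).2, hωE⟩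
  calc μ.real (⋃ A ∈ Q, A ∩ ((core μ m c E A)ᶜ ∩ F))
      ≤ ∑ A ∈ Q, μ.real (A ∩ ((core μ m c E A)ᶜ ∩ F)) := measureReal_biUnion_finset_le _ _
    _ ≤ c⁻¹ * ∑ A ∈ Q, μ.real (A ∩ (F \ E)) := by
      rw [Finset.mul_sum]
      exact Finset.sum_le_sum hcell
    _ = c⁻¹ * μ.real (⋃ A ∈ Q, A ∩ (F \ E)) := by
      rw [measureReal_biUnion_finset (f := fun A => A ∩ (F \ E))
        (fun A hA B hB hAB => (hdisj hA hB hAB).mono Set.inter_subset_left Set.inter_subset_left)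
        fun A hA => (hQ A hA).inter (hF.diff hE)]
    _ ≤ c⁻¹ * μ.real (F \ E) :=
      mul_le_mul_of_nonneg_left
        (measureReal_mono (Set.iUnion₂_subset fun A _ => Set.inter_subset_right))
        (inv_nonneg.2 hc.le)

end Core

/-! ### Removal in a coordinate system -/

section CoordinateSystem

variable {ι Ω : Type*}

/-- The faces of `e` with at most `k` vertices. -/
def low (e : Finset ι) (k : ℕ) : Set (Finset ι) := {f | f ⊆ e ∧ #f ≤ k}

lemma low_subset_Iic (e : Finset ι) (k : ℕ) : low e k ⊆ Set.Iic e := fun _ hf => hf.1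

section Cells

variable {𝒜 : Finset ι → Set (Set Ω)} {K : Type*} {face : K → Finset ι} {S : K → Set Ω}

lemma cell_eq_biInter (α : K → Prop) (e : Finset ι) (k : ℕ) :
    cell S α {i | face i ∈ e.powersetCard k} =
      ⋂ f ∈ e.powersetCard k, cell S α {i | face i = f} := by
  rw [← cell_iUnion]
  congr 1
  ext i
  simp

variable [Finite K]

lemma cell_mem_algOn_low (hS : ∀ i, S i ∈ 𝒜 (face i)) (α : K → Prop) (e : Finset ι) (k : ℕ) :
    cell S α {i | face i ∈ e.powersetCard k} ∈ algOn 𝒜 (low e k) := by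
  refine cell_mem isSetAlgebra_algOn fun i hi => mem_algOn_of_mem (f := face i) ?_ (hS i)
  exact (Finset.mem_powersetCard.1 hi).imp_right fun hcard => hcard.le

/-- On a cell that decides all generators with a face of size `k + 1`, only the generators with
smaller faces still matter. -/
lemma exists_mem_algOn_low_cell_inter_eq (hS : ∀ i, S i ∈ 𝒜 (face i)) (α : K → Prop)
    {e : Finset ι} {k : ℕ} (Φ : ({i // face i ∈ low e (k + 1)} → Prop) → Prop) :
    ∃ G ∈ algOn 𝒜 (low e k), cell S α {i | face i ∈ e.powersetCard (k + 1)} ∩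
      boolComb Φ (fun i : {i // face i ∈ low e (k + 1)} => S i) =
        cell S α {i | face i ∈ e.powersetCard (k + 1)} ∩ G := by
  classical
  refine ⟨_, boolComb_mem isSetAlgebra_algOn ?_, cell_inter_boolComb S α Subtype.val Φ⟩
  rintro ⟨i, hie, hcard⟩
  split_ifs with hi
  · exact setOf_const_mem isSetAlgebra_algOn _
  · have hlt : #(face i) < k + 1 :=
      hcard.lt_of_ne fun hk => hi (Finset.mem_powersetCard.2 ⟨hie, hk⟩)
    have hlow : face i ∈ low e k := ⟨hie, Nat.lt_succ_iff.1 hlt⟩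
    exact mem_algOn_of_mem hlow (hS i)

end Cells

lemma low_eq_Iio {e : Finset ι} {k : ℕ} (he : #e = k + 1) : low e k = Set.Iio e := by
  ext f
  refine ⟨fun hf => hf.1.lt_of_ne fun hfe => ?_, fun hf => ⟨le_of_lt hf, ?_⟩⟩
  · have := hf.2
    rw [hfe, he] at this
    omega
  · have := Finset.card_lt_card hf
    omega

variable [DecidableEq ι] [MeasurableSpace Ω]

/-- An abstract model of the events in a product space: `𝒜 f` consists of events that depend only on
the coordinates in `f`. The field `condIndep` says that an event `A` in the coordinates `e` is
independent, conditionally on the events in the faces `𝓖` of `e`, of all events in sets of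
coordinates whose trace on `e` belongs to `𝓖`. -/
structure IsCoordinateSystem (𝒜 : Finset ι → Set (Set Ω)) (μ : Measure Ω) : Prop where
  mono : Monotone 𝒜
  measurableSet : ∀ f, ∀ s ∈ 𝒜 f, MeasurableSet s
  eq_empty_or_univ : ∀ s ∈ 𝒜 ∅, s = ∅ ∨ s = Set.univ
  condIndep : ∀ {e : Finset ι} {𝓖 : Set (Finset ι)} {A C : Set Ω}, 𝓖 ⊆ Set.Iic e →
    MeasurableSet[sigmaOn 𝒜 {e}] A → MeasurableSet[sigmaOn 𝒜 {f | f ∩ e ∈ 𝓖}] C →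
    ∫ ω in C, (μ⟦A | sigmaOn 𝒜 𝓖⟧) ω ∂μ = μ.real (A ∩ C)

namespace IsCoordinateSystem

variable {𝒜 : Finset ι → Set (Set Ω)} {μ : Measure Ω}

lemma sigmaOn_le (h : IsCoordinateSystem 𝒜 μ) (F : Set (Finset ι)) : sigmaOn 𝒜 F ≤ ‹_› :=
  HypergraphRemoval.sigmaOn_le fun f _ => h.measurableSet f

lemma sigmaOn_mono (h : IsCoordinateSystem 𝒜 μ) {F G : Set (Finset ι)}
    (hFG : ∀ f ∈ F, ∃ g ∈ G, f ⊆ g) : sigmaOn 𝒜 F ≤ sigmaOn 𝒜 G :=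
  HypergraphRemoval.sigmaOn_mono h.mono hFG

lemma measurableSet_of_subset (h : IsCoordinateSystem 𝒜 μ) {F G : Set (Finset ι)} {s : Set Ω}
    (hs : MeasurableSet[sigmaOn 𝒜 F] s) (hFG : F ⊆ G) : MeasurableSet[sigmaOn 𝒜 G] s :=
  h.sigmaOn_mono (fun f hf => ⟨f, hFG hf, subset_rfl⟩) _ hs

lemma sigmaOn_low_le (h : IsCoordinateSystem 𝒜 μ) (e : Finset ι) (k : ℕ) :
    sigmaOn 𝒜 (low e k) ≤ sigmaOn 𝒜 {e} :=
  h.sigmaOn_mono fun _ hf => ⟨e, rfl, hf.1⟩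

/-- The events `A f` may be replaced, one at a time, by the supports of their conditional
probabilities on the proper faces of `f`: given those, `A f` is independent of everything that
remains, because no other coordinate set in play contains `f`. -/
lemma measure_inter_biInter_condProb_pos_eq_zero (h : IsCoordinateSystem 𝒜 μ)
    {A : Finset ι → Set Ω} (hA : ∀ f, MeasurableSet[sigmaOn 𝒜 {f}] (A f))
    {T : Finset (Finset ι)} (hT : IsAntichain (· ⊆ ·) (T : Set (Finset ι))) :
    ∀ {C : Set Ω}, MeasurableSet[sigmaOn 𝒜 {g | ∀ f ∈ T, ¬ f ⊆ g}] C →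
      μ (C ∩ ⋂ f ∈ T, A f) = 0 →
      μ (C ∩ ⋂ f ∈ T, {ω | 0 < (μ⟦A f | sigmaOn 𝒜 (Set.Iio f)⟧) ω}) = 0 := by
  induction T using Finset.induction_on with
  | empty => simp
  | insert f T hfT ih =>
    intro C hC hnull
    have hanti : ∀ g ∈ T, ¬ f ⊆ g ∧ ¬ g ⊆ f := fun g hg =>
      have hne : f ≠ g := fun hfg => hfT (hfg ▸ hg)
      ⟨hT (by simp) (by simp [hg]) hne, hT (by simp [hg]) (by simp) hne.symm⟩
    have hrest : MeasurableSet[sigmaOn 𝒜 {g | g ∩ f ∈ Set.Iio f}] (C ∩ ⋂ g ∈ T, A g) := by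
      have htrace : ∀ g, ¬ f ⊆ g → g ∩ f ∈ Set.Iio f := fun g hg =>
        Finset.inter_subset_right.lt_of_ne fun hgf => hg (Finset.inter_eq_right.1 hgf)
      refine .inter (h.measurableSet_of_subset hC fun g hg => htrace g (hg f (by simp))) ?_
      exact Finset.measurableSet_biInter _ fun g hg =>
        h.measurableSet_of_subset (hA g) (Set.singleton_subset_iff.2 (htrace g (hanti g hg).1))
    have hsupp : μ ((C ∩ ⋂ g ∈ T, A g) ∩ {ω | 0 < (μ⟦A f | sigmaOn 𝒜 (Set.Iio f)⟧) ω}) = 0 := by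
      refine measure_inter_pos_eq_zero integrable_condExp (condProb_nonneg _)
        (h.sigmaOn_le _ _ hrest) ?_
      rw [h.condIndep Set.Iio_subset_Iic_self (hA f) hrest, Set.inter_left_comm,
        ← Finset.set_biInter_insert, measureReal_def, hnull, ENNReal.toReal_zero]
    rw [Finset.set_biInter_insert, ← Set.inter_assoc]
    refine ih (hT.subset (by simp)) (.inter ?_ ?_) (by rwa [Set.inter_right_comm])
    · exact h.measurableSet_of_subset hC fun g hg f' hf' => hg f' (by simp [hf'])
    · exact h.measurableSet_of_subset (measurableSet_condProb_pos _) fun g hg f' hf' hfg =>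
        (hanti f' hf').2 (hfg.trans hg.le)

lemma eq_empty_or_univ_of_measurableSet_low_zero (h : IsCoordinateSystem 𝒜 μ) {e : Finset ι}
    {s : Set Ω} (hs : MeasurableSet[sigmaOn 𝒜 (low e 0)] s) : s = ∅ ∨ s = Set.univ := by
  have hbot : sigmaOn 𝒜 (low e 0) ≤ ⊥ := by
    refine HypergraphRemoval.sigmaOn_le fun f hf s hs =>
      MeasurableSpace.measurableSet_bot_iff.2 (h.eq_empty_or_univ s ?_)
    rwa [← Finset.card_eq_zero.1 (Nat.le_zero.1 hf.2)]
  exact MeasurableSpace.measurableSet_bot_iff.1 (hbot s hs)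

section FiniteMeasure

variable [IsFiniteMeasure μ]

lemma measure_diff_condProb_pos_eq_zero (h : IsCoordinateSystem 𝒜 μ)
    {A : Set Ω} {f : Finset ι} (hA : MeasurableSet[sigmaOn 𝒜 {f}] A) (F : Set (Finset ι)) :
    μ (A \ {ω | 0 < (μ⟦A | sigmaOn 𝒜 F⟧) ω}) = 0 :=
  measure_inter_condProb_pos_compl (h.sigmaOn_le _) (h.sigmaOn_le _ _ hA)

lemma measure_iInter_core_inter_cells_eq_zero (h : IsCoordinateSystem 𝒜 μ) {c : ℝ}
    {H : Finset (Finset ι)} (hcH : c * #H < 1) {k : ℕ} {E A : Finset ι → Set Ω}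
    (hE : ∀ e, MeasurableSet[sigmaOn 𝒜 (low e (k + 1))] (E e)) (hnull : μ (⋂ e ∈ H, E e) = 0)
    (hA : ∀ f, MeasurableSet[sigmaOn 𝒜 {f}] (A f)) :
    μ ((⋂ e ∈ H, core μ (sigmaOn 𝒜 (low e k)) c (E e) (⋂ f ∈ e.powersetCard (k + 1), A f)) ∩
      ⋂ f ∈ H.biUnion (powersetCard (k + 1)), A f) = 0 := by
  set N := fun e => core μ (sigmaOn 𝒜 (low e k)) c (E e) (⋂ f ∈ e.powersetCard (k + 1), A f)
  set T := H.biUnion (powersetCard (k + 1))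
  refine measure_eq_zero_of_forall_diff_le hnull hcH fun e he => ?_
  set B := ⋂ f ∈ e.powersetCard (k + 1), A f
  set D := (⋂ e ∈ H, N e) ∩ ⋂ f ∈ T.filter fun f => ¬ f ⊆ e, A f
  have hBD : (⋂ e ∈ H, N e) ∩ ⋂ f ∈ T, A f = B ∩ D := by
    ext ω
    simp only [B, D, T, Set.mem_inter_iff, Set.mem_iInter, Finset.mem_filter, Finset.mem_biUnion,
      Finset.mem_powersetCard]
    grind
  have hB : MeasurableSet[sigmaOn 𝒜 {e}] B := Finset.measurableSet_biInter _ fun f hf =>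
    h.sigmaOn_mono (by simpa using (Finset.mem_powersetCard.1 hf).1) _ (hA f)
  have hD : MeasurableSet[sigmaOn 𝒜 {f | f ∩ e ∈ low e k}] D := by
    refine .inter (Finset.measurableSet_biInter _ fun e' _ => ?_)
      (Finset.measurableSet_biInter _ fun f hf => ?_)
    · exact h.measurableSet_of_subset measurableSet_core fun f hf => ⟨Finset.inter_subset_right,
        (Finset.card_le_card Finset.inter_subset_left).trans hf.2⟩
    · refine h.measurableSet_of_subset (hA f) (Set.singleton_subset_iff.2 ?_)
      simp only [T, Finset.mem_filter, Finset.mem_biUnion, Finset.mem_powersetCard] at hf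
      obtain ⟨⟨_, _, _, hcard⟩, hfe⟩ := hf
      have hlt : f ∩ e ⊂ f :=
        Finset.inter_subset_left.lt_of_ne fun hfe' => hfe (Finset.inter_eq_left.1 hfe')
      exact ⟨Finset.inter_subset_right,
        Nat.lt_succ_iff.1 ((Finset.card_lt_card hlt).trans_eq hcard)⟩
  have hEe := h.sigmaOn_low_le _ _ _ (hE e)
  rw [hBD, ← Set.sdiff_inter_right_comm]
  exact measureReal_diff_inter_le_of_subset_core (h.sigmaOn_le _ _ hD)
    (Set.inter_subset_left.trans (Set.biInter_subset_of_mem he))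
    (h.condIndep (low_subset_Iic e k) hB hD) (h.condIndep (low_subset_Iic e k) (hB.diff hEe) hD)

lemma measure_iInter_core_eq_zero (h : IsCoordinateSystem 𝒜 μ) {c : ℝ} (hc : 0 < c)
    {H : Finset (Finset ι)} (hcH : c * #H < 1) {k : ℕ} {E A : Finset ι → Set Ω}
    (hE : ∀ e, MeasurableSet[sigmaOn 𝒜 (low e (k + 1))] (E e)) (hnull : μ (⋂ e ∈ H, E e) = 0)
    (hA : ∀ f, MeasurableSet[sigmaOn 𝒜 {f}] (A f)) :
    μ (⋂ e ∈ H, core μ (sigmaOn 𝒜 (low e k)) c (E e) (⋂ f ∈ e.powersetCard (k + 1), A f)) = 0 := by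
  set N := fun e => core μ (sigmaOn 𝒜 (low e k)) c (E e) (⋂ f ∈ e.powersetCard (k + 1), A f)
  set T := H.biUnion (powersetCard (k + 1))
  have hcard : ∀ f ∈ T, #f = k + 1 := by simp +contextual [T]
  let supp : Finset ι → Set Ω := fun f => {ω | 0 < (μ⟦A f | sigmaOn 𝒜 (Set.Iio f)⟧) ω}
  have hsupp : μ ((⋂ e ∈ H, N e) ∩ ⋂ f ∈ T, supp f) = 0 := by
    refine h.measure_inter_biInter_condProb_pos_eq_zero hA (fun f hf g hg hne hfg => ?_) ?_
      (h.measure_iInter_core_inter_cells_eq_zero hcH hE hnull hA)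
    · exact hne (Finset.eq_of_subset_of_card_le hfg (by rw [hcard f hf, hcard g hg]))
    · refine Finset.measurableSet_biInter _ fun e _ =>
        h.measurableSet_of_subset measurableSet_core fun g hg f hf hfg => ?_
      have := hcard f hf
      have := (Finset.card_le_card hfg).trans hg.2
      omega
  have hcore : ∀ e, ∀ f ∈ e.powersetCard (k + 1), μ (N e ∩ (supp f)ᶜ) = 0 := by
    intro e f hf
    obtain ⟨hfe, hfk⟩ := Finset.mem_powersetCard.1 hf
    refine measure_core_inter_eq_zero (h.sigmaOn_le _) hc
      (Finset.measurableSet_biInter _ fun g _ => h.sigmaOn_le _ _ (hA g)) ?_ ?_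
    · refine h.measurableSet_of_subset (measurableSet_condProb_pos _).compl fun g hg => ?_
      have := Finset.card_lt_card hg
      exact ⟨hg.le.trans hfe, by omega⟩
    · exact measure_mono_null (Set.inter_subset_inter_left _ (Set.biInter_subset_of_mem hf))
        (h.measure_diff_condProb_pos_eq_zero (hA f) _)
  have hcores : μ (⋃ e ∈ H, ⋃ f ∈ e.powersetCard (k + 1), N e ∩ (supp f)ᶜ) = 0 :=
    (measure_biUnion_null_iff H.countable_toSet).2 fun e _ =>
      (measure_biUnion_null_iff (Finset.countable_toSet _)).2 (hcore e)
  refine measure_mono_null (fun ω hω => ?_) (measure_union_null hsupp hcores)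
  by_cases hωT : ω ∈ ⋂ f ∈ T, supp f
  · exact .inl ⟨hω, hωT⟩
  · simp only [Set.mem_iInter, T, Finset.mem_biUnion, not_forall] at hωT
    obtain ⟨f, ⟨e, he, hf⟩, hωf⟩ := hωT
    simp only [Set.mem_iInter] at hω
    exact .inr (Set.mem_iUnion₂.2 ⟨e, he, Set.mem_iUnion₂.2 ⟨f, hf, hω e he, hωf⟩⟩)

lemma measureReal_iUnion_cell_off_core_le (h : IsCoordinateSystem 𝒜 μ) {e : Finset ι} {k : ℕ}
    {c : ℝ} (hc : 0 < c) {E : Set Ω} (hE : MeasurableSet E) {K : Type*} [Finite K]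
    {face : K → Finset ι} {S : K → Set Ω} (hS : ∀ i, S i ∈ 𝒜 (face i))
    (Φ : ({i // face i ∈ low e (k + 1)} → Prop) → Prop) :
    letI A := fun α => cell S α {i | face i ∈ e.powersetCard (k + 1)}
    letI B := boolComb Φ fun i : {i // face i ∈ low e (k + 1)} => S i
    μ.real (⋃ α, A α ∩ ((core μ (sigmaOn 𝒜 (low e k)) c E (A α))ᶜ ∩ B)) ≤
      c⁻¹ * μ.real (B \ E) := by
  classical
  have := Fintype.ofFinite (K → Prop)
  set A := fun α => cell S α {i | face i ∈ e.powersetCard (k + 1)}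
  have hB : MeasurableSet (boolComb Φ fun i : {i // face i ∈ low e (k + 1)} => S i) :=
    h.sigmaOn_le (low e (k + 1)) _ <| measurableSet_of_mem_algOn <| boolComb_mem isSetAlgebra_algOn
      (S := fun i : {i // face i ∈ low e (k + 1)} => S i) fun i => mem_algOn_of_mem i.2 (hS i)
  have hQ : ∀ α, A α ∈ Finset.univ.image A := fun α => Finset.mem_image_of_mem _ (Finset.mem_univ α)
  refine le_trans ?_ (measureReal_biUnion_off_core_le (Q := Finset.univ.image A)
    (h.sigmaOn_le (low e k)) hc ?_ ?_ hE hB ?_)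
  · exact measureReal_mono (Set.iUnion_subset fun α _ hω => Set.mem_iUnion₂.2 ⟨A α, hQ α, hω⟩)
      (measure_ne_top _ _)
  · simp only [Finset.mem_image, Finset.mem_univ, true_and, forall_exists_index,
      forall_apply_eq_imp_iff]
    exact fun α => h.sigmaOn_le _ _ (measurableSet_of_mem_algOn (cell_mem_algOn_low hS α e _))
  · simp only [Finset.coe_image, Finset.coe_univ, Set.image_univ]
    rintro _ ⟨α, rfl⟩ _ ⟨β, rfl⟩ hne
    exact cell_disjoint_of_ne hne
  · simp only [Finset.mem_image, Finset.mem_univ, true_and, forall_exists_index,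
      forall_apply_eq_imp_iff]
    intro α
    obtain ⟨G, hG, hBG⟩ := exists_mem_algOn_low_cell_inter_eq hS α Φ
    exact ⟨G, measurableSet_of_mem_algOn hG, hBG⟩

/-- A point of `E` is lost by lying outside the approximating Boolean combination, in the core of
its cell but outside `L α`, or outside the core of its cell. -/
lemma measureReal_diff_iInter_cell_compl_union_le (h : IsCoordinateSystem 𝒜 μ) {e : Finset ι}
    {k : ℕ} {c η ε : ℝ} (hc : 0 < c) {E : Set Ω} (hE : MeasurableSet E) {K : Type*} [Finite K]
    {face : K → Finset ι} {S : K → Set Ω} (hS : ∀ i, S i ∈ 𝒜 (face i))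
    (Φ : ({i // face i ∈ low e (k + 1)} → Prop) → Prop)
    (hη : μ.real (symmDiff E (boolComb Φ fun i : {i // face i ∈ low e (k + 1)} => S i)) ≤ η)
    {L : (K → Prop) → Set Ω} (hL : ∀ α, μ.real (core μ (sigmaOn 𝒜 (low e k)) c E
      (cell S α {i | face i ∈ e.powersetCard (k + 1)}) \ L α) ≤ ε) :
    μ.real (E \ ⋂ α, (cell S α {i | face i ∈ e.powersetCard (k + 1)})ᶜ ∪ L α) ≤
      η + Nat.card (K → Prop) * ε + c⁻¹ * η := by
  set A := fun α => cell S α {i | face i ∈ e.powersetCard (k + 1)}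
  set N : Set Ω → Set Ω := core μ (sigmaOn 𝒜 (low e k)) c E
  set B := boolComb Φ fun i : {i // face i ∈ low e (k + 1)} => S i
  have hcover : E \ ⋂ α, (A α)ᶜ ∪ L α ⊆
      (E \ B ∪ ⋃ α, N (A α) \ L α) ∪ ⋃ α, A α ∩ ((N (A α))ᶜ ∩ B) := by
    rintro ω ⟨hωE, hω⟩
    simp only [Set.mem_iInter, not_forall, Set.mem_union, not_or, Set.notMem_compl_iff] at hω
    obtain ⟨α, hωA, hωL⟩ := hω
    by_cases hωB : ω ∈ B
    · by_cases hωN : ω ∈ N (A α)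
      · exact .inl (.inr (Set.mem_iUnion.2 ⟨α, hωN, hωL⟩))
      · exact .inr (Set.mem_iUnion.2 ⟨α, hωA, hωN, hωB⟩)
    · exact .inl (.inl ⟨hωE, hωB⟩)
  have hoff : μ.real (⋃ α, A α ∩ ((N (A α))ᶜ ∩ B)) ≤ c⁻¹ * η :=
    (h.measureReal_iUnion_cell_off_core_le hc hE hS Φ).trans (mul_le_mul_of_nonneg_left
      ((measureReal_mono Set.subset_union_right).trans hη) (inv_nonneg.2 hc.le))
  have hcores : μ.real (⋃ α, N (A α) \ L α) ≤ Nat.card (K → Prop) * ε := by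
    have := Fintype.ofFinite (K → Prop)
    rw [Nat.card_eq_fintype_card, ← nsmul_eq_mul]
    exact (measureReal_iUnion_fintype_le _).trans (Finset.sum_le_card_nsmul _ _ _ fun α _ => hL α)
  calc _ ≤ μ.real (E \ B ∪ ⋃ α, N (A α) \ L α) + μ.real (⋃ α, A α ∩ ((N (A α))ᶜ ∩ B)) :=
        (measureReal_mono hcover).trans (measureReal_union_le _ _)
    _ ≤ μ.real (E \ B) + μ.real (⋃ α, N (A α) \ L α) + μ.real (⋃ α, A α ∩ ((N (A α))ᶜ ∩ B)) :=
        add_le_add_left (measureReal_union_le _ _) _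
    _ ≤ η + Nat.card (K → Prop) * ε + c⁻¹ * η :=
        add_le_add_three ((measureReal_mono Set.subset_union_left).trans hη) hcores hoff

lemma exists_removal_step (h : IsCoordinateSystem 𝒜 μ) {H : Finset (Finset ι)} {k : ℕ}
    {E : Finset ι → Set Ω} (hE : ∀ e, MeasurableSet[sigmaOn 𝒜 (low e (k + 1))] (E e))
    (hnull : μ (⋂ e ∈ H, E e) = 0)
    (ih : ∀ {N : Finset ι → Set Ω}, (∀ e, MeasurableSet[sigmaOn 𝒜 (low e k)] (N e)) →
      μ (⋂ e ∈ H, N e) = 0 → ∀ {ε : ℝ}, 0 < ε → ∃ F : Finset ι → Set Ω,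
        (∀ e ∈ H, F e ∈ algOn 𝒜 (low e k)) ∧ ⋂ e ∈ H, F e = ∅ ∧
        ∀ e ∈ H, μ.real (N e \ F e) ≤ ε) {ε : ℝ} (hε : 0 < ε) :
    ∃ F : Finset ι → Set Ω, (∀ e ∈ H, F e ∈ algOn 𝒜 (low e (k + 1))) ∧ ⋂ e ∈ H, F e = ∅ ∧
      ∀ e ∈ H, μ.real (E e \ F e) ≤ ε := by
  set c : ℝ := 1 / (#H + 1) with hc_def
  have hc : 0 < c := by positivity
  have hcH : c * #H < 1 := by rw [hc_def, one_div_mul_eq_div, div_lt_one] <;> linarith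
  set η : ℝ := ε / (2 * (1 + c⁻¹)) with hη_def
  have hη : 0 < η := by positivity
  choose B hB hEB using fun e => exists_mem_measureReal_symmDiff_lt (μ := μ) isSetAlgebra_algOn
    (h.sigmaOn_le _) sigmaOn_eq_generateFrom_algOn (hE e) hη
  obtain ⟨K, _, face, S, hS, hBS⟩ := exists_common_generators (H := H) fun e _ => hB e
  set A : (K → Prop) → Finset ι → Set Ω := fun α e => cell S α {i | face i ∈ e.powersetCard (k + 1)}
  have hcore : ∀ α, μ (⋂ e ∈ H, core μ (sigmaOn 𝒜 (low e k)) c (E e) (A α e)) = 0 := by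
    intro α
    have hf : ∀ f, cell S α {i | face i = f} ∈ algOn 𝒜 {f} := fun f =>
      cell_mem isSetAlgebra_algOn fun i hi =>
        mem_algOn_of_mem (f := face i) hi (hS i)
    simpa only [← cell_eq_biInter] using
      h.measure_iInter_core_eq_zero hc hcH hE hnull fun f => measurableSet_of_mem_algOn (hf f)
  have hN : 0 < (Nat.card (K → Prop) : ℝ) := Nat.cast_pos.2 Nat.card_pos
  choose L hL hLempty hNL using fun α => ih (fun _ => measurableSet_core) (hcore α)
    (show 0 < ε / (2 * Nat.card (K → Prop)) by positivity)
  refine ⟨fun e => ⋂ α, (A α e)ᶜ ∪ L α e, fun e he => ?_, ?_, fun e he => ?_⟩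
  · have := Fintype.ofFinite (K → Prop)
    have hlow : algOn 𝒜 (low e k) ⊆ algOn 𝒜 (low e (k + 1)) :=
      algOn_mono h.mono fun f hf => ⟨f, ⟨hf.1, hf.2.trans k.le_succ⟩, le_rfl⟩
    have hLF : ∀ α, (A α e)ᶜ ∪ L α e ∈ algOn 𝒜 (low e (k + 1)) := fun α =>
      isSetAlgebra_algOn.union_mem (isSetAlgebra_algOn.compl_mem (cell_mem_algOn_low hS α e _))
        (hlow (hL α e he))
    simpa using isSetAlgebra_algOn.biInter_mem Finset.univ fun α _ => hLF α
  · refine Set.eq_empty_of_forall_notMem fun ω hω => ?_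
    have hωL : ω ∈ ⋂ e ∈ H, L (fun i => ω ∈ S i) e := Set.mem_iInter₂.2 fun e he =>
      (Set.mem_iInter.1 (Set.mem_iInter₂.1 hω e he) fun i => ω ∈ S i).resolve_left
        fun hA => hA (mem_cell_self S _ ω)
    exact (hLempty _ ▸ hωL : ω ∈ (∅ : Set Ω))
  · obtain ⟨Φ, hΦ⟩ := hBS e he
    refine (h.measureReal_diff_iInter_cell_compl_union_le hc (h.sigmaOn_le _ _ (hE e)) hS Φ
      (hΦ ▸ (hEB e).le) fun α => hNL α e he).trans_eq ?_
    rw [hη_def]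
    field_simp
    ring

end FiniteMeasure

variable [IsProbabilityMeasure μ]

theorem exists_removal_low (h : IsCoordinateSystem 𝒜 μ) {H : Finset (Finset ι)} (k : ℕ) :
    ∀ {E : Finset ι → Set Ω}, (∀ e, MeasurableSet[sigmaOn 𝒜 (low e k)] (E e)) →
      μ (⋂ e ∈ H, E e) = 0 → ∀ {ε : ℝ}, 0 < ε → ∃ F : Finset ι → Set Ω,
        (∀ e ∈ H, F e ∈ algOn 𝒜 (low e k)) ∧ ⋂ e ∈ H, F e = ∅ ∧
        ∀ e ∈ H, μ.real (E e \ F e) ≤ ε := by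
  induction k with
  | zero =>
    intro E hE hnull ε hε
    have htriv := fun e => h.eq_empty_or_univ_of_measurableSet_low_zero (hE e)
    refine ⟨E, fun e _ => ?_, ?_, fun e _ => by simpa using hε.le⟩
    · rcases htriv e with he | he <;> rw [he]
      exacts [isSetAlgebra_algOn.empty_mem, isSetAlgebra_algOn.univ_mem]
    · by_cases hempty : ∃ e ∈ H, E e = ∅
      · obtain ⟨e, he, hEe⟩ := hempty
        exact Set.subset_eq_empty (Set.biInter_subset_of_mem he) hEe
      · push Not at hempty
        have huniv : ⋂ e ∈ H, E e = Set.univ := by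
          simpa only [Set.iInter_eq_univ] using
            fun e he => (htriv e).resolve_left (hempty e he).ne_empty
        simp [huniv] at hnull
  | succ k ih => exact fun hE hnull _ hε => h.exists_removal_step hE hnull ih hε

theorem exists_removal_of_card_eq (h : IsCoordinateSystem 𝒜 μ)
    {H : Finset (Finset ι)} {k : ℕ} (hH : ∀ e ∈ H, #e = k + 1) {E : Finset ι → Set Ω}
    (hE : ∀ e, MeasurableSet[sigmaOn 𝒜 {e}] (E e)) (hnull : μ (⋂ e ∈ H, E e) = 0) {ε : ℝ}
    (hε : 0 < ε) : ∃ F : Finset ι → Set Ω, (∀ e ∈ H, F e ∈ algOn 𝒜 (low e k)) ∧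
      ⋂ e ∈ H, F e = ∅ ∧ ∀ e ∈ H, μ.real (E e \ F e) ≤ ε := by
  have hanti : IsAntichain (· ⊆ ·) (H : Set (Finset ι)) := fun e he f hf hne hef =>
    hne (Finset.eq_of_subset_of_card_le hef (by rw [hH e he, hH f hf]))
  have hsupp : μ (⋂ e ∈ H, {ω | 0 < (μ⟦E e | sigmaOn 𝒜 (low e k)⟧) ω}) = 0 := by
    rw [Set.iInter₂_congr fun e he => by rw [low_eq_Iio (hH e he)]]
    simpa only [Set.univ_inter] using
      h.measure_inter_biInter_condProb_pos_eq_zero hE hanti .univ (by rwa [Set.univ_inter])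
  obtain ⟨F, hF, hempty, hle⟩ :=
    h.exists_removal_low k (fun e => measurableSet_condProb_pos (E e)) hsupp hε
  refine ⟨F, hF, hempty, fun e he => le_trans ?_ (hle e he)⟩
  calc μ.real (E e \ F e)
      ≤ μ.real ({ω | 0 < (μ⟦E e | sigmaOn 𝒜 (low e k)⟧) ω} \ F e) +
        μ.real (E e \ {ω | 0 < (μ⟦E e | sigmaOn 𝒜 (low e k)⟧) ω}) := by
        refine (measureReal_mono fun ω hω => ?_).trans (measureReal_union_le _ _)
        by_cases hpos : 0 < (μ⟦E e | sigmaOn 𝒜 (low e k)⟧) ω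
        exacts [.inl ⟨hpos, hω.2⟩, .inr ⟨hω.1, hpos⟩]
    _ = μ.real ({ω | 0 < (μ⟦E e | sigmaOn 𝒜 (low e k)⟧) ω} \ F e) := by
        rw [(measureReal_eq_zero_iff).2 (h.measure_diff_condProb_pos_eq_zero (hE e) _), add_zero]

end IsCoordinateSystem

end CoordinateSystem

/-! ### The Loeb measure of an ultraproduct -/

section Loeb

variable {X : ℕ → Type*}

/-- The sample space of the limit object. Instead of passing to the quotient by equality along the
ultrafilter, only sets invariant under that equivalence are ever considered. -/
def Ult (X : ℕ → Type*) : Type _ := ∀ n, X n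

/-- The internal set attached to a sequence of sets `A n ⊆ X n`: the sequences lying in `A n` for
almost every `n`, with respect to a fixed nonprincipal ultrafilter on `ℕ`. -/
def internalSet (A : ∀ n, Set (X n)) : Set (Ult X) :=
  {ω | ∀ᶠ n in (hyperfilter ℕ : Filter ℕ), ω n ∈ A n}

instance : MeasurableSpace (Ult X) :=
  MeasurableSpace.generateFrom (Set.range (internalSet (X := X)))

lemma measurableSet_internalSet (A : ∀ n, Set (X n)) : MeasurableSet (internalSet A) :=
  MeasurableSpace.measurableSet_generateFrom ⟨A, rfl⟩

lemma boolComb_internalSet {ι : Type*} [Finite ι] (Φ : (ι → Prop) → Prop)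
    (S : ι → ∀ n, Set (X n)) :
    boolComb Φ (fun i => internalSet (S i)) = internalSet fun n => boolComb Φ fun i => S i n := by
  ext ω
  have hgen : ∀ i, ∀ᶠ n in (hyperfilter ℕ : Filter ℕ),
      (ω n ∈ S i n) = (ω ∈ internalSet (S i)) := by
    intro i
    by_cases h : ω ∈ internalSet (S i)
    · filter_upwards [h] with n hn
      simp [hn, h]
    · filter_upwards [Ultrafilter.eventually_not.2 h] with n hn
      simp [hn, h]
  have hcomb : ∀ᶠ n in (hyperfilter ℕ : Filter ℕ),
      (Φ (fun i => ω n ∈ S i n) ↔ Φ fun i => ω ∈ internalSet (S i)) := by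
    filter_upwards [eventually_all.2 hgen] with n hn
    rw [funext hn]
  exact ((eventually_congr hcomb).trans eventually_const).symm

lemma compl_internalSet (A : ∀ n, Set (X n)) : (internalSet A)ᶜ = internalSet fun n => (A n)ᶜ :=
  boolComb_internalSet (fun p : Unit → Prop => ¬ p ()) fun _ => A

lemma union_internalSet (A B : ∀ n, Set (X n)) :
    internalSet A ∪ internalSet B = internalSet fun n => A n ∪ B n := by
  simpa [boolComb] using! boolComb_internalSet (fun p : Bool → Prop => p true ∨ p false)
    fun b => cond b A B

lemma inter_internalSet (A B : ∀ n, Set (X n)) :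
    internalSet A ∩ internalSet B = internalSet fun n => A n ∩ B n :=
  Set.ext fun _ => eventually_and.symm

lemma biInter_internalSet {κ : Type*} (K : Finset κ) (A : κ → ∀ n, Set (X n)) :
    ⋂ k ∈ K, internalSet (A k) = internalSet fun n => ⋂ k ∈ K, A k n := by
  ext ω
  simp only [internalSet, Set.mem_iInter, Set.mem_ofPred_eq, Finset.eventually_all]

lemma internalSet_empty : internalSet (fun n => (∅ : Set (X n))) = ∅ :=
  Set.ext fun _ => eventually_const

lemma internalSet_univ : internalSet (fun n => (Set.univ : Set (X n))) = Set.univ :=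
  Set.ext fun _ => eventually_const

lemma isSetAlgebra_range_internalSet : IsSetAlgebra (Set.range (internalSet (X := X))) where
  empty_mem := ⟨_, internalSet_empty⟩
  compl_mem := by
    rintro _ ⟨A, rfl⟩
    exact ⟨_, (compl_internalSet A).symm⟩
  union_mem := by
    rintro _ _ ⟨A, rfl⟩ ⟨B, rfl⟩
    exact ⟨_, (union_internalSet A B).symm⟩

/-- The normalised counting measure of `A n`, as a sequence in `n`. -/
noncomputable def density (A : ∀ n, Set (X n)) (n : ℕ) : ℝ≥0∞ := (A n).ncard / Nat.card (X n)

/-- The limit of the densities along the ultrafilter. -/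
noncomputable def limDensity (A : ∀ n, Set (X n)) : ℝ≥0∞ :=
  ((hyperfilter ℕ).map (density A)).lim

lemma tendsto_density (A : ∀ n, Set (X n)) :
    Tendsto (density A) (hyperfilter ℕ : Filter ℕ) (𝓝 (limDensity A)) :=
  Ultrafilter.le_nhds_lim _

lemma limDensity_eq {A : ∀ n, Set (X n)} {l : ℝ≥0∞}
    (h : Tendsto (density A) (hyperfilter ℕ : Filter ℕ) (𝓝 l)) : limDensity A = l :=
  tendsto_nhds_unique (tendsto_density A) h

lemma limDensity_empty : limDensity (fun n => (∅ : Set (X n))) = 0 :=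
  limDensity_eq (tendsto_const_nhds.congr fun n => by simp [density])

variable [∀ n, Nonempty (X n)]

lemma internalSet_nonempty {A : ∀ n, Set (X n)}
    (h : ∃ᶠ n in (hyperfilter ℕ : Filter ℕ), (A n).Nonempty) : (internalSet A).Nonempty := by
  classical
  refine ⟨fun n => if hn : (A n).Nonempty then hn.some else Classical.arbitrary _, ?_⟩
  filter_upwards [Ultrafilter.frequently_iff_eventually.1 h] with n hn
  simpa only [dif_pos hn] using hn.some_mem

lemma eventually_eq_empty {A : ∀ n, Set (X n)} (h : internalSet A = ∅) :
    ∀ᶠ n in (hyperfilter ℕ : Filter ℕ), A n = ∅ := by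
  by_contra hc
  have hA : ∃ᶠ n in (hyperfilter ℕ : Filter ℕ), (A n).Nonempty :=
    (not_eventually.1 hc).mono fun n => Set.nonempty_iff_ne_empty.2
  exact (internalSet_nonempty hA).ne_empty h

/-- Countable saturation. -/
lemma exists_internalSet_subset_biUnion (B : ∀ n, Set (X n)) (A : ℕ → ∀ n, Set (X n))
    (h : internalSet B ⊆ ⋃ i, internalSet (A i)) :
    ∃ N, internalSet B ⊆ ⋃ i ∈ Finset.range N, internalSet (A i) := by
  by_contra! hc
  set D : ℕ → ∀ n, Set (X n) := fun N n => B n \ ⋃ i ∈ Finset.range N, A i n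
  have hD : ∀ N, ∀ᶠ n in (hyperfilter ℕ : Filter ℕ), (D N n).Nonempty := by
    intro N
    obtain ⟨ω, hωB, hωA⟩ := Set.not_subset.1 (hc N)
    simp only [Set.mem_iUnion, not_exists] at hωA
    have hωA' : ∀ᶠ n in (hyperfilter ℕ : Filter ℕ), ∀ i ∈ Finset.range N, ω n ∉ A i n :=
      (Finset.eventually_all _).2 fun i hi => Ultrafilter.eventually_not.2 (hωA i hi)
    filter_upwards [hωB, hωA'] with n hnB hnA
    exact ⟨ω n, hnB, by simpa using hnA⟩
  -- the diagonal sequence avoids `A i n` for as many `i ≤ n` as possible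
  classical
  set N : ℕ → ℕ := fun n => Nat.findGreatest (fun N => (D N n).Nonempty) n
  obtain ⟨ω, hω⟩ := internalSet_nonempty (A := fun n => D (N n) n) <|
    ((hD 0).mono fun n hn => Nat.findGreatest_spec (P := fun N => (D N n).Nonempty) n.zero_le hn)
      |>.frequently
  obtain ⟨i, hi⟩ := Set.mem_iUnion.1 (h (hω.mono fun n hn => hn.1))
  have hlarge : ∀ᶠ n in (hyperfilter ℕ : Filter ℕ), i < N n := by
    have hge : ∀ᶠ n in (hyperfilter ℕ : Filter ℕ), i + 1 ≤ n :=
      Nat.hyperfilter_le_atTop (eventually_ge_atTop _)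
    filter_upwards [hD (i + 1), hge] with n hn hin using Nat.le_findGreatest hin hn
  obtain ⟨n, ⟨hn, hnA⟩, hnω⟩ := ((hlarge.and hi).and hω).exists
  exact hnω.2 (Set.mem_biUnion (Finset.mem_range.2 hn) hnA)

lemma limDensity_congr {A B : ∀ n, Set (X n)} (h : internalSet A = internalSet B) :
    limDensity A = limDensity B := by
  have hsymm : internalSet (fun n => symmDiff (A n) (B n)) = ∅ := by
    rw [← Set.bot_eq_empty, ← symmDiff_eq_bot.2 h]
    exact (boolComb_internalSet (fun p : Bool → Prop => (p true ∧ ¬ p false) ∨ (p false ∧ ¬ p true))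
      fun b => cond b A B).symm
  refine limDensity_eq ((tendsto_density B).congr' ?_)
  filter_upwards [eventually_eq_empty hsymm] with n hn
  rw [density, density, symmDiff_eq_bot.1 hn]

/-- The limit density of an internal set. A set is internal in many ways, but they all have the same
limit density, of which the infimum is taken only to choose one. -/
noncomputable def internalDensity (s : Set (Ult X)) : ℝ≥0∞ :=
  sInf (limDensity '' (internalSet ⁻¹' {s}))

lemma internalDensity_internalSet (A : ∀ n, Set (X n)) :
    internalDensity (internalSet A) = limDensity A := by
  refine le_antisymm (sInf_le ⟨A, rfl, rfl⟩) (le_sInf ?_)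
  rintro _ ⟨B, hB, rfl⟩
  exact (limDensity_congr hB).ge

variable [∀ n, Finite (X n)]

lemma limDensity_union {A B : ∀ n, Set (X n)} (h : Disjoint (internalSet A) (internalSet B)) :
    limDensity (fun n => A n ∪ B n) = limDensity A + limDensity B := by
  rw [Set.disjoint_iff_inter_eq_empty, inter_internalSet] at h
  refine limDensity_eq (((tendsto_density A).add (tendsto_density B)).congr' ?_)
  filter_upwards [eventually_eq_empty h] with n hn
  rw [density, density, density, Set.ncard_union_eq (Set.disjoint_iff_inter_eq_empty.2 hn),
    Nat.cast_add, ENNReal.add_div]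

variable (X) in
/-- The limit density as a content on the algebra of internal sets. -/
noncomputable def loebContent : AddContent ℝ≥0∞ (Set.range (internalSet (X := X))) :=
  isSetAlgebra_range_internalSet.isSetRing.addContent_of_union internalDensity
    (by rw [← internalSet_empty, internalDensity_internalSet, limDensity_empty])
    (by
      rintro _ _ ⟨A, rfl⟩ ⟨B, rfl⟩ h
      simp only [union_internalSet, internalDensity_internalSet, limDensity_union h])

lemma isSigmaSubadditive_loebContent : (loebContent X).IsSigmaSubadditive := by
  intro f hf hU
  choose A hA using hf
  obtain ⟨B, hB⟩ := hU
  obtain rfl : (fun i => internalSet (A i)) = f := funext hA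
  obtain ⟨N, hN⟩ := exists_internalSet_subset_biUnion B A hB.subset
  have hfin : ⋃ i, internalSet (A i) = ⋃ i ∈ Finset.range N, internalSet (A i) :=
    (hB ▸ hN).antisymm (Set.iUnion₂_subset fun i _ => Set.subset_iUnion (internalSet ∘ A) i)
  rw [hfin]
  exact (addContent_biUnion_le isSetAlgebra_range_internalSet.isSetRing
    fun i _ => ⟨A i, rfl⟩).trans (ENNReal.sum_le_tsum _)

variable (X) in
/-- The Loeb measure: the extension of the limit density of internal sets to the σ-algebra they
generate. -/
noncomputable def loebMeasure : Measure (Ult X) :=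
  (loebContent X).measure isSetAlgebra_range_internalSet.isSetRing.isSetSemiring le_rfl
    isSigmaSubadditive_loebContent

lemma loebMeasure_internalSet (A : ∀ n, Set (X n)) :
    loebMeasure X (internalSet A) = limDensity A :=
  ((loebContent X).measure_eq isSetAlgebra_range_internalSet.isSetRing.isSetSemiring rfl
    isSigmaSubadditive_loebContent ⟨A, rfl⟩).trans (internalDensity_internalSet A)

lemma limDensity_univ : limDensity (fun n => (Set.univ : Set (X n))) = 1 := by
  refine limDensity_eq (tendsto_const_nhds.congr fun n => ?_)
  rw [density, Set.ncard_univ, ENNReal.div_self (Nat.cast_ne_zero.2 Nat.card_pos.ne')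
    (ENNReal.natCast_ne_top _)]

instance : IsProbabilityMeasure (loebMeasure X) where
  measure_univ := by rw [← internalSet_univ, loebMeasure_internalSet, limDensity_univ]

lemma tendsto_ncard_div_card_loebMeasure (A : ∀ n, Set (X n)) :
    Tendsto (fun n => ((A n).ncard : ℝ) / Nat.card (X n)) (hyperfilter ℕ : Filter ℕ)
      (𝓝 ((loebMeasure X).real (internalSet A))) := by
  have h := (ENNReal.tendsto_toReal (measure_ne_top (loebMeasure X) (internalSet A))).comp
    (loebMeasure_internalSet A ▸ tendsto_density A)
  exact h.congr fun n => by simp [density, ENNReal.toReal_div]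

end Loeb

/-! ### The limit of a sequence of finite products -/

section Slicing

variable {ι : Type*} [DecidableEq ι] {Y : ι → Type*}

lemma dependsOn_mem_comp_piecewise {f : Finset ι} {A : Set (∀ i, Y i)}
    (hA : DependsOn (· ∈ A) (f : Set ι)) (e : Finset ι) (y : ∀ i, Y i) :
    DependsOn (· ∈ {x | e.piecewise x y ∈ A}) ((f ∩ e : Finset ι) : Set ι) := by
  refine fun x x' hx => hA fun i hi => ?_
  by_cases hie : i ∈ e
  · simpa [hie] using hx i (Finset.mem_coe.2 (Finset.mem_inter.2 ⟨hi, hie⟩))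
  · simp [hie]

variable [Nonempty (∀ i, Y i)]

lemma exists_abs_sum_le_abs_sum_piecewise [Fintype (∀ i, Y i)] (e : Finset ι)
    (F : (∀ i, Y i) → ℝ) : ∃ y, |∑ x, F x| ≤ |∑ x, F (e.piecewise x y)| := by
  by_contra! hlt
  -- exchanging the coordinates outside `e` of a pair is an involution
  have hswap : Function.Involutive fun p : (∀ i, Y i) × (∀ i, Y i) =>
      (e.piecewise p.1 p.2, e.piecewise p.2 p.1) := by
    rintro ⟨x, y⟩
    ext i <;> by_cases hi : i ∈ e <;> simp [hi]
  have hsum : ∑ y, ∑ x, F (e.piecewise x y) = Fintype.card (∀ i, Y i) * ∑ x, F x := by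
    rw [Finset.sum_comm, ← Fintype.sum_prod_type',
      Fintype.sum_equiv hswap.toPerm (fun p => F (e.piecewise p.1 p.2)) (fun p => F p.1)
        fun p => rfl, Fintype.sum_prod_type]
    simp [Finset.mul_sum]
  have habs := calc
    Fintype.card (∀ i, Y i) * |∑ x, F x| = |∑ y, ∑ x, F (e.piecewise x y)| := by
      rw [hsum, abs_mul, Nat.abs_cast]
    _ ≤ ∑ y, |∑ x, F (e.piecewise x y)| := Finset.abs_sum_le_sum_abs _ _
    _ < ∑ _y : ∀ i, Y i, |∑ x, F x| :=
      Finset.sum_lt_sum_of_nonempty Finset.univ_nonempty fun y _ => hlt y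
  simp at habs

lemma exists_abs_sum_ncard_le_abs_sum_ncard_piecewise [Finite (∀ i, Y i)] {κ : Type*} [Fintype κ]
    (e : Finset ι) (w : κ → ℝ) {P : κ → Set (∀ i, Y i)}
    (hP : ∀ k, DependsOn (· ∈ P k) (e : Set ι)) (C : Set (∀ i, Y i)) :
    ∃ y, |∑ k, w k * ((P k ∩ C).ncard : ℝ)| ≤
      |∑ k, w k * ((P k ∩ {x | e.piecewise x y ∈ C}).ncard : ℝ)| := by
  classical
  have := Fintype.ofFinite (∀ i, Y i)
  have hcard : ∀ D : Set (∀ i, Y i), (D.ncard : ℝ) = ∑ x, if x ∈ D then 1 else 0 := fun D => by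
    rw [Finset.sum_boole, ← Set.ncard_coe_finset]
    simp
  obtain ⟨y, hy⟩ := exists_abs_sum_le_abs_sum_piecewise e
    fun x => ∑ k, w k * if x ∈ P k ∩ C then 1 else 0
  have hPy : ∀ k x, e.piecewise x y ∈ P k ↔ x ∈ P k := fun k x =>
    iff_of_eq (hP k fun i hi => e.piecewise_eq_of_mem x y hi)
  refine ⟨y, ?_⟩
  simp only [hcard, Finset.mul_sum]
  rw [Finset.sum_comm, Finset.sum_comm (s := univ (α := κ))]
  simpa only [Set.mem_inter_iff, hPy, Set.mem_ofPred_eq] using hy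

end Slicing

section Limit

variable {ι : Type*} {W : ℕ → ι → Type*}

variable (W) in
/-- The events of the limit of the finite products `∏ i, W n i` that depend only on the coordinates
in `f`: the internal sets attached to sequences of sets with this property. -/
def events (f : Finset ι) : Set (Set (Ult fun n => ∀ i, W n i)) :=
  {s | ∃ A, (∀ n, DependsOn (· ∈ A n) (f : Set ι)) ∧ internalSet A = s}

lemma isSetAlgebra_events (f : Finset ι) : IsSetAlgebra (events W f) where
  empty_mem := ⟨fun _ => ∅, fun n x y _ => rfl, internalSet_empty⟩
  compl_mem := by
    rintro _ ⟨A, hA, rfl⟩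
    exact ⟨_, fun n x y hxy => congrArg Not (hA n hxy), (compl_internalSet A).symm⟩
  union_mem := by
    rintro _ _ ⟨A, hA, rfl⟩ ⟨B, hB, rfl⟩
    exact ⟨_, fun n x y hxy => congrArg₂ Or (hA n hxy) (hB n hxy), (union_internalSet A B).symm⟩

lemma events_mono : Monotone (events W) := by
  rintro f g hfg _ ⟨A, hA, rfl⟩
  exact ⟨A, fun n => (hA n).mono (Finset.coe_subset.2 hfg), rfl⟩

lemma algOn_events_singleton (f : Finset ι) : algOn (events W) {f} = events W f := by
  rw [algOn, Set.biUnion_singleton, (isSetAlgebra_events f).generateSetAlgebra_eq]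

lemma measurableSet_of_mem_events {f : Finset ι} {s : Set (Ult fun n => ∀ i, W n i)}
    (hs : s ∈ events W f) : MeasurableSet s := by
  obtain ⟨A, -, rfl⟩ := hs
  exact measurableSet_internalSet A

lemma sigmaOn_events_le (𝓕 : Set (Finset ι)) :
    sigmaOn (events W) 𝓕 ≤ (inferInstance : MeasurableSpace (Ult fun n => ∀ i, W n i)) :=
  sigmaOn_le fun _ _ _ => measurableSet_of_mem_events

lemma measurableSet_of_mem_algOn_events {𝓕 : Set (Finset ι)} {s : Set (Ult fun n => ∀ i, W n i)}
    (hs : s ∈ algOn (events W) 𝓕) : MeasurableSet s :=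
  sigmaOn_events_le 𝓕 _ (measurableSet_of_mem_algOn hs)

lemma eq_empty_or_univ_of_mem_events_empty {s : Set (Ult fun n => ∀ i, W n i)}
    (hs : s ∈ events W ∅) : s = ∅ ∨ s = Set.univ := by
  obtain ⟨A, hA, rfl⟩ := hs
  refine (Set.eq_empty_or_nonempty _).imp_right fun ⟨ω, hω⟩ => Set.eq_univ_of_forall fun ω' => ?_
  filter_upwards [hω] with n hn
  exact cast ((hA n) (by simp)) hn

variable [DecidableEq ι]

lemma exists_internalSet_piecewise_mem_algOn {e : Finset ι} {𝓖 : Set (Finset ι)}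
    {C : Set (Ult fun n => ∀ i, W n i)} (hC : C ∈ algOn (events W) {f | f ∩ e ∈ 𝓖}) :
    ∃ A, C = internalSet A ∧ ∀ y : ∀ n i, W n i,
      internalSet (fun n => {x | e.piecewise x (y n) ∈ A n}) ∈ algOn (events W) 𝓖 := by
  obtain ⟨I, _, S, Φ, hS, rfl⟩ := exists_boolComb_of_mem_generateSetAlgebra hC
  simp only [Set.mem_iUnion, exists_prop] at hS
  choose f hf A hA hAS using hS
  obtain rfl : (fun i => internalSet (A i)) = S := funext hAS
  refine ⟨_, boolComb_internalSet Φ A, fun y => ?_⟩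
  have hmem : boolComb Φ (fun i => internalSet fun n => {x | e.piecewise x (y n) ∈ A i n}) ∈
      algOn (events W) 𝓖 := by
    refine boolComb_mem isSetAlgebra_algOn fun i => ?_
    have hi : f i ∩ e ∈ 𝓖 := hf i
    exact mem_algOn_of_mem hi ⟨_, fun n => dependsOn_mem_comp_piecewise (hA i n) e (y n), rfl⟩
  rwa [boolComb_internalSet] at hmem

variable [Finite ι] [∀ n i, Finite (W n i)] [∀ n i, Nonempty (W n i)]

lemma exists_mem_algOn_abs_setIntegral_le {e : Finset ι} {𝓖 : Set (Finset ι)}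
    {ψ : Ult (fun n => ∀ i, W n i) → ℝ} (hψ : ψ ∈ simpleSpan (events W e))
    {C : Set (Ult fun n => ∀ i, W n i)} (hC : C ∈ algOn (events W) {f | f ∩ e ∈ 𝓖}) :
    ∃ D ∈ algOn (events W) 𝓖,
      |∫ ω in C, ψ ω ∂loebMeasure _| ≤ |∫ ω in D, ψ ω ∂loebMeasure _| := by
  obtain ⟨N, w, P, hP, rfl⟩ := exists_eq_sum_of_mem_simpleSpan hψ
  choose Q hQ hQP using hP
  obtain rfl : (fun k => internalSet (Q k)) = P := funext hQP
  obtain ⟨A, rfl, hA⟩ := exists_internalSet_piecewise_mem_algOn hC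
  choose y hy using fun n =>
    exists_abs_sum_ncard_le_abs_sum_ncard_piecewise e w (fun k => hQ k n) (A n)
  refine ⟨_, hA y, ?_⟩
  have hlim : ∀ B : ∀ n, Set (∀ i, W n i), Tendsto
      (fun n => |∑ k, w k * ((Q k n ∩ B n).ncard : ℝ)| / Nat.card (∀ i, W n i)) (hyperfilter ℕ)
      (𝓝 |∑ k, w k * (loebMeasure _).real (internalSet (Q k) ∩ internalSet B)|) := by
    intro B
    simp only [inter_internalSet]
    refine (tendsto_finsetSum _ fun k _ =>
      (tendsto_ncard_div_card_loebMeasure fun n => Q k n ∩ B n).const_mul (w k)).abs.congr ?_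
    simp [← mul_div_assoc, ← Finset.sum_div, abs_div]
  simp only [setIntegral_sum_indicator w fun k => measurableSet_internalSet (Q k)]
  exact le_of_tendsto_of_tendsto (hlim _) (hlim _)
    (.of_forall fun n => div_le_div_of_nonneg_right (hy n) (Nat.cast_nonneg _))

/-- Approximate `φ` by a combination of events depending only on `e`; for such a combination `C` may
be replaced by a slice of `C`, which lies in the algebra of `𝓖`. -/
lemma setIntegral_eq_zero_of_mem_algOn_events {e : Finset ι} {𝓖 : Set (Finset ι)}
    {φ : Ult (fun n => ∀ i, W n i) → ℝ} (hφ : StronglyMeasurable[sigmaOn (events W) {e}] φ)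
    (hφi : Integrable φ (loebMeasure _))
    (hzero : ∀ D ∈ algOn (events W) 𝓖, ∫ ω in D, φ ω ∂loebMeasure _ = 0)
    {C : Set (Ult fun n => ∀ i, W n i)} (hC : C ∈ algOn (events W) {f | f ∩ e ∈ 𝓖}) :
    ∫ ω in C, φ ω ∂loebMeasure _ = 0 := by
  refine abs_nonpos_iff.1 (le_of_forall_pos_le_add fun ε hε => ?_)
  obtain ⟨ψ, hψ, hφψ⟩ := exists_mem_simpleSpan_integral_abs_sub_le isSetAlgebra_algOn
    (sigmaOn_events_le {e}) sigmaOn_eq_generateFrom_algOn hφ hφi (half_pos hε)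
  rw [algOn_events_singleton] at hψ
  have happrox := fun B => (abs_setIntegral_sub_le hφi
    (integrable_of_mem_simpleSpan (fun s => measurableSet_of_mem_events) hψ) B).trans hφψ
  obtain ⟨D, hD, hCD⟩ := exists_mem_algOn_abs_setIntegral_le hψ hC
  have hCε := happrox C
  have hDε := happrox D
  rw [hzero D hD, zero_sub, abs_neg] at hDε
  linarith [abs_sub_abs_le_abs_sub (∫ ω in C, φ ω ∂loebMeasure _) (∫ ω in C, ψ ω ∂loebMeasure _)]

variable (W) in
theorem isCoordinateSystem_events :
    IsCoordinateSystem (events W) (loebMeasure fun n => ∀ i, W n i) where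
  mono := events_mono
  measurableSet _ _ := measurableSet_of_mem_events
  eq_empty_or_univ _ := eq_empty_or_univ_of_mem_events_empty
  condIndep := by
    intro e 𝓖 A C h𝓖 hA hC
    have hA' := sigmaOn_events_le _ _ hA
    have hle : sigmaOn (events W) 𝓖 ≤ sigmaOn (events W) {e} :=
      sigmaOn_mono events_mono fun f hf => ⟨e, rfl, h𝓖 hf⟩
    have hindi := integrable_indicator_one (μ := loebMeasure fun n => ∀ i, W n i) hA'
    have hsub : ∀ D, ∫ ω in D, ((loebMeasure _)⟦A | sigmaOn (events W) 𝓖⟧ -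
        A.indicator fun _ => (1 : ℝ)) ω ∂loebMeasure _ =
          ∫ ω in D, ((loebMeasure _)⟦A | sigmaOn (events W) 𝓖⟧) ω ∂loebMeasure _ -
            (loebMeasure _).real (A ∩ D) := fun D => by
      rw [← setIntegral_indicator_one hA', ← integral_sub integrable_condExp.integrableOn
        hindi.integrableOn]
      rfl
    have hzero : ∀ D ∈ algOn (events W) 𝓖, ∫ ω in D,
        ((loebMeasure _)⟦A | sigmaOn (events W) 𝓖⟧ - A.indicator fun _ => (1 : ℝ)) ω
          ∂loebMeasure _ = 0 := fun D hD => by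
      rw [hsub, setIntegral_condProb (sigmaOn_events_le 𝓖) hA' (measurableSet_of_mem_algOn hD),
        sub_self]
    rw [← sub_eq_zero, ← hsub]
    rw [sigmaOn_eq_generateFrom_algOn] at hC
    refine setIntegral_eq_zero_of_forall_mem isSetAlgebra_algOn
      (fun s => measurableSet_of_mem_algOn_events) (integrable_condExp.sub hindi) (fun D hD =>
        setIntegral_eq_zero_of_mem_algOn_events
          ((stronglyMeasurable_condExp.mono hle).sub (stronglyMeasurable_const.indicator hA))
          (integrable_condExp.sub hindi) hzero hD) hC

end Limit

/-! ### Averages -/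

section Averages

variable {α κ : Type*} [Fintype α]

lemma avg_mono {f g : α → ℝ} (h : ∀ x, f x ≤ g x) : avg f ≤ avg g :=
  div_le_div_of_nonneg_right (Finset.sum_le_sum fun x _ => h x) (Nat.cast_nonneg _)

lemma avg_const_add [Nonempty α] (c : ℝ) (f : α → ℝ) : avg (fun x => c + f x) = c + avg f := by
  simp [avg, Finset.sum_add_distrib, add_div]

lemma avg_const_mul (c : ℝ) (f : α → ℝ) : avg (fun x => c * f x) = c * avg f := by
  rw [avg, avg, ← Finset.mul_sum, mul_div_assoc]

lemma avg_indicator_one (D : Set α) :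
    avg (D.indicator fun _ => (1 : ℝ)) = D.ncard / Nat.card α := by
  classical
  simp only [avg, Set.indicator_apply, Finset.sum_boole, Nat.card_eq_fintype_card]
  rw [← Set.ncard_coe_finset]
  simp

lemma avg_comp_restr {ι : Type} [Fintype ι] [DecidableEq ι] {Y : ι → Type} [∀ i, Fintype (Y i)]
    [∀ i, Nonempty (Y i)] (e : Finset ι) (f : (∀ i : e, Y i) → ℝ) :
    avg (fun x : ∀ i, Y i => f (restr e x)) = avg f := by
  let φ := Equiv.piEquivPiSubtypeProd (· ∈ e) Y
  have hcard : (Fintype.card (∀ i : {i // i ∉ e}, Y i) : ℝ) ≠ 0 :=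
    Nat.cast_ne_zero.2 Fintype.card_ne_zero
  have hsum : ∑ x : ∀ i, Y i, f (restr e x) =
      ∑ p : (∀ i : {i // i ∈ e}, Y i) × (∀ i : {i // i ∉ e}, Y i), f p.1 :=
    Fintype.sum_equiv φ _ _ fun x => rfl
  rw [avg, avg, hsum, Fintype.card_congr φ, Fintype.card_prod, Fintype.sum_prod_type, Nat.cast_mul]
  simp only [Finset.sum_const, Finset.card_univ, nsmul_eq_mul, ← Finset.mul_sum]
  rw [mul_comm, mul_div_mul_right _ _ hcard]

lemma pow_mul_ncard_biInter_div_card_le_avg_prod {K : Finset κ} {f : κ → α → ℝ}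
    (hf : ∀ k ∈ K, ∀ x, 0 ≤ f k x) {c : ℝ} (hc : 0 ≤ c) :
    c ^ #K * ((⋂ k ∈ K, {x | c ≤ f k x}).ncard / Nat.card α) ≤ avg fun x => ∏ k ∈ K, f k x := by
  rw [← avg_indicator_one, ← avg_const_mul]
  refine avg_mono fun x => ?_
  by_cases hx : x ∈ ⋂ k ∈ K, {x | c ≤ f k x}
  · rw [Set.indicator_of_mem hx, mul_one, ← Finset.prod_const]
    exact Finset.prod_le_prod (fun _ _ => hc) fun k hk => Set.mem_iInter₂.1 hx k hk
  · rw [Set.indicator_of_notMem hx, mul_zero]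
    exact Finset.prod_nonneg fun k hk => hf k hk x

lemma avg_mul_indicator_compl_le [Nonempty α] {f : α → ℝ} (hf : ∀ x, f x ≤ 1) {c : ℝ} (hc : 0 ≤ c)
    (F : Set α) : avg (fun x => f x * Fᶜ.indicator (fun _ => (1 : ℝ)) x) ≤
      c + ({x | c ≤ f x} \ F).ncard / Nat.card α := by
  rw [← avg_indicator_one, ← avg_const_add]
  refine avg_mono fun x => ?_
  by_cases hxF : x ∈ F
  · simpa [hxF] using hc
  · by_cases hxc : c ≤ f x
    · simpa [hxF, hxc] using (hf x).trans (le_add_of_nonneg_left hc)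
    · simpa [hxF, hxc] using (not_le.1 hxc).le

end Averages

/-! ### Complexity -/

section Complexity

variable {ι : Type} [DecidableEq ι] {Y : ι → Type} {e : Finset ι}

lemma isCliqueSet_empty (he : e.Nonempty) : IsCliqueSet e (∅ : Set (∀ i : e, Y i)) :=
  let ⟨j, hj⟩ := he
  ⟨fun _ => ∅, fun _ => ⟨False.elim, fun h => h j hj⟩⟩

lemma complexityLE_iUnion {κ : Type*} [Finite κ] (he : e.Nonempty) {P : κ → Set (∀ i : e, Y i)}
    (hP : ∀ k, IsCliqueSet e (P k)) (hdisj : ∀ k l, k ≠ l → P k ∩ P l = ∅) {T : ℕ}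
    (hT : Nat.card κ ≤ T) : ComplexityLE e (⋃ k, P k) T := by
  let φ : κ ↪ Fin T := (Finite.equivFin κ).toEmbedding.trans (Fin.castLEEmb hT)
  have hon : ∀ k, Function.extend φ P ⊥ (φ k) = P k := φ.injective.extend_apply P ⊥
  have hoff : ∀ t, (¬ ∃ k, φ k = t) → Function.extend φ P ⊥ t = ∅ :=
    Function.extend_apply' P ⊥
  refine ⟨Function.extend φ P ⊥, fun t => ?_, fun t t' hne => ?_, iSup_extend_bot φ.injective P⟩
  · by_cases ht : ∃ k, φ k = t
    · obtain ⟨k, rfl⟩ := ht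
      exact hon k ▸ hP k
    · exact hoff t ht ▸ isCliqueSet_empty he
  · by_cases ht : ∃ k, φ k = t
    · by_cases ht' : ∃ k, φ k = t'
      · obtain ⟨⟨k, rfl⟩, l, rfl⟩ := And.intro ht ht'
        rw [hon, hon, hdisj k l (ne_of_apply_ne φ hne)]
      · rw [hoff t' ht', Set.inter_empty]
    · rw [hoff t ht, Set.empty_inter]

lemma complexityLE_mono (he : e.Nonempty) {E : Set (∀ i : e, Y i)} {T T' : ℕ}
    (h : ComplexityLE e E T) (hT : T ≤ T') : ComplexityLE e E T' := by
  obtain ⟨P, hP, hdisj, rfl⟩ := h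
  exact complexityLE_iUnion he hP hdisj (by simpa using hT)

lemma isCliqueSet_cell_faceProj {κ : Type*} {c : κ → ι} (hc : ∀ k, c k ∈ e)
    (B : ∀ k, Set (∀ i : e.erase (c k), Y i)) (a : κ → Prop) :
    IsCliqueSet e (cell (fun k => faceProj (c k) ⁻¹' B k) a Set.univ) := by
  refine ⟨fun j => {y | ∀ k (hk : c k = j), (hk ▸ y) ∈ B k ↔ a k}, fun z => ⟨fun hz j hj => ?_,
    fun hz k _ => hz (c k) (hc k) k rfl⟩⟩
  rintro k rfl
  exact hz k trivial

lemma complexityLE_boolComb_faceProj {κ : Type*} [Finite κ] (he : e.Nonempty) {c : κ → ι}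
    (hc : ∀ k, c k ∈ e) (B : ∀ k, Set (∀ i : e.erase (c k), Y i)) (Φ : (κ → Prop) → Prop) :
    ComplexityLE e (boolComb Φ fun k => faceProj (c k) ⁻¹' B k) (Nat.card (κ → Prop)) := by
  rw [boolComb_eq_iUnion_cell, Set.biUnion_eq_iUnion]
  refine complexityLE_iUnion he (fun a : {a | Φ a} => isCliqueSet_cell_faceProj hc B a)
    (fun a b hab => ?_) (Finite.card_subtype_le _)
  refine Set.eq_empty_of_forall_notMem fun z hz => hab (Subtype.ext (funext fun k => propext ?_))
  exact (hz.1 k trivial).symm.trans (hz.2 k trivial)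

lemma exists_preimage_faceProj_restr_eq [∀ i, Nonempty (Y i)] {f : Finset ι} (hfe : f < e)
    {S : Set (∀ i, Y i)} (hS : DependsOn (· ∈ S) (f : Set ι)) :
    ∃ j ∈ e, ∃ B : Set (∀ i : e.erase j, Y i), S = restr e ⁻¹' (faceProj j ⁻¹' B) := by
  obtain ⟨j, hj, hjf⟩ := Finset.exists_of_ssubset hfe
  obtain ⟨B, hB⟩ := dependsOn_iff_exists_comp.1
    (hS.mono (Finset.coe_subset.2 (Finset.subset_erase.2 ⟨hfe.le, hjf⟩)))
  exact ⟨j, hj, {y | B y}, Set.ext fun x => iff_of_eq (congrFun hB x)⟩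

lemma exists_internalSet_restr_complexityLE {W : ℕ → ι → Type} [∀ n i, Nonempty (W n i)]
    (he : e.Nonempty) {F : Set (Ult fun n => ∀ i, W n i)} (hF : F ∈ algOn (events W) (Set.Iio e)) :
    ∃ (E : ∀ n, Set (∀ i : e, W n i)) (T : ℕ),
      F = internalSet (fun n => restr e ⁻¹' E n) ∧ ∀ n, ComplexityLE e (E n)ᶜ T := by
  obtain ⟨κ, _, S, Φ, hS, rfl⟩ := exists_boolComb_of_mem_generateSetAlgebra hF
  simp only [Set.mem_iUnion, exists_prop] at hS
  choose f hf A hA hAS using hS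
  obtain rfl : (fun k => internalSet (A k)) = S := funext hAS
  choose c hc B hB using fun k n => exists_preimage_faceProj_restr_eq (hf k) (hA k n)
  refine ⟨fun n => boolComb Φ fun k => faceProj (c k n) ⁻¹' B k n, Nat.card (κ → Prop), ?_,
    fun n => complexityLE_boolComb_faceProj he (fun k => hc k n) _ fun p => ¬ Φ p⟩
  simp only [boolComb_internalSet, hB]
  rfl

end Complexity

/-! ### Transfer from the limit -/

section Transfer

variable {ι : Type} [DecidableEq ι]

/-- The conclusion of the removal lemma for the weighted hypergraph `g` with edge set `H`: deleting
a set of complexity at most `T` and `g`-weight at most `ε` from each edge destroys all copies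
of `H`. -/
def HasRemoval {Y : ι → Type} [∀ i, Fintype (Y i)] (ε : ℝ) (T : ℕ) (H : Finset (Finset ι))
    (g : ∀ e : Finset ι, (∀ i : e, Y i) → ℝ) : Prop :=
  ∃ E : ∀ e : Finset ι, Set (∀ i : e, Y i),
    (∀ e ∈ H, ComplexityLE e (E e)ᶜ T) ∧
    (∀ x : ∀ i, Y i, ∏ e ∈ H, (E e).indicator (fun _ => (1 : ℝ)) (restr e x) = 0) ∧
    ∀ e ∈ H, avg (fun x => g e x * (E e)ᶜ.indicator (fun _ => (1 : ℝ)) x) ≤ ε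

lemma HasRemoval.mono {Y : ι → Type} [∀ i, Fintype (Y i)] {ε : ℝ} {T T' : ℕ}
    {H : Finset (Finset ι)} {g : ∀ e : Finset ι, (∀ i : e, Y i) → ℝ} (hH : ∀ e ∈ H, e.Nonempty)
    (h : HasRemoval ε T H g) (hT : T ≤ T') : HasRemoval ε T' H g :=
  let ⟨E, hE, hprod, havg⟩ := h
  ⟨E, fun e he => complexityLE_mono (hH e he) (hE e he) hT, hprod, havg⟩

lemma loebMeasure_biInter_threshold_eq_zero {κ : Type*} {X : ℕ → Type*} [∀ n, Fintype (X n)]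
    [∀ n, Nonempty (X n)] {K : Finset κ} {f : ∀ n, κ → X n → ℝ}
    (hf : ∀ n, ∀ k ∈ K, ∀ x, 0 ≤ f n k x) {c : ℝ} (hc : 0 < c)
    (hlim : Tendsto (fun n => avg fun x => ∏ k ∈ K, f n k x) (hyperfilter ℕ) (𝓝 0)) :
    loebMeasure X (⋂ k ∈ K, internalSet fun n => {x | c ≤ f n k x}) = 0 := by
  rw [biInter_internalSet, ← measureReal_eq_zero_iff]
  refine le_antisymm (nonpos_of_mul_nonpos_right ?_ (pow_pos hc #K)) measureReal_nonneg
  exact le_of_tendsto_of_tendsto ((tendsto_ncard_div_card_loebMeasure _).const_mul (c ^ #K)) hlim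
    (.of_forall fun n => pow_mul_ncard_biInter_div_card_le_avg_prod (hf n) hc.le)

variable [Fintype ι] {W : ℕ → ι → Type} [∀ n i, Fintype (W n i)] [∀ n i, Nonempty (W n i)]
  {g : ∀ n, ∀ e : Finset ι, (∀ i : e, W n i) → ℝ} {H : Finset (Finset ι)} {k : ℕ} {ε : ℝ}

lemma exists_limit_removal (hH : ∀ e ∈ H, #e = k + 1) (hg : ∀ n, ∀ e ∈ H, ∀ x, 0 ≤ g n e x)
    (hlim : Tendsto (fun n => avg fun x => ∏ e ∈ H, g n e (restr e x)) (hyperfilter ℕ) (𝓝 0))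
    {c : ℝ} (hc : 0 < c) (hε : 0 < ε) :
    ∃ (E : ∀ n, ∀ e : Finset ι, Set (∀ i : e, W n i)) (T : ℕ),
      (∀ n, ∀ e ∈ H, ComplexityLE e (E n e)ᶜ T) ∧
      (⋂ e ∈ H, internalSet fun n => restr e ⁻¹' E n e) = ∅ ∧
      ∀ e ∈ H, (loebMeasure fun n => ∀ i, W n i).real
        (internalSet fun n => {x | c ≤ g n e (restr e x)} \ restr e ⁻¹' E n e) ≤ ε := by
  classical
  have hS : ∀ e, (internalSet fun n => {x : ∀ i, W n i | c ≤ g n e (restr e x)}) ∈ events W e :=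
    fun e => ⟨_, fun n x y hxy => by
      simp only [Set.mem_ofPred_eq, show restr e x = restr e y from funext fun i => hxy i i.2], rfl⟩
  obtain ⟨F, hF, hempty, hle⟩ := (isCoordinateSystem_events W).exists_removal_of_card_eq hH
    (fun e => measurableSet_of_mem_algOn (mem_algOn_of_mem (Set.mem_singleton e) (hS e)))
    (loebMeasure_biInter_threshold_eq_zero (fun n e he x => hg n e he (restr e x)) hc hlim) hε
  choose! E T hE using fun (e : Finset ι) (he : e ∈ H) => exists_internalSet_restr_complexityLE
    (Finset.card_pos.1 (by simp [hH e he])) (low_eq_Iio (hH e he) ▸ hF e he)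
  refine ⟨fun n e => E e n, ∑ e ∈ H, T e, fun n e he => ?_, ?_, fun e he => ?_⟩
  · exact complexityLE_mono (Finset.card_pos.1 (by simp [hH e he])) ((hE e he).2 n)
      (Finset.single_le_sum (fun _ _ => Nat.zero_le _) he)
  · rw [← hempty]
    exact Set.iInter₂_congr fun e he => (hE e he).1.symm
  · refine le_of_eq_of_le ?_ (hle e he)
    rw [(hE e he).1, Set.sdiff_eq, compl_internalSet, inter_internalSet]
    rfl

theorem exists_eventually_hasRemoval (hH : ∀ e ∈ H, #e = k + 1)
    (hg : ∀ n, ∀ e ∈ H, ∀ x, 0 ≤ g n e x ∧ g n e x ≤ 1)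
    (hlim : Tendsto (fun n => avg fun x => ∏ e ∈ H, g n e (restr e x)) (hyperfilter ℕ) (𝓝 0))
    (hε : 0 < ε) : ∃ T, ∀ᶠ n in (hyperfilter ℕ : Filter ℕ), HasRemoval ε T H (g n) := by
  obtain ⟨E, T, hT, hempty, hle⟩ := exists_limit_removal hH (fun n e he x => (hg n e he x).1) hlim
    (half_pos hε) (show 0 < ε / 4 by positivity)
  rw [biInter_internalSet] at hempty
  have hsmall : ∀ᶠ n in (hyperfilter ℕ : Filter ℕ), ∀ e ∈ H,
      (({x : ∀ i, W n i | ε / 2 ≤ g n e (restr e x)} \ restr e ⁻¹' E n e).ncard : ℝ) /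
        Nat.card (∀ i, W n i) < ε / 2 :=
    (Finset.eventually_all H).2 fun e he =>
      (tendsto_ncard_div_card_loebMeasure _).eventually_lt_const (by linarith [hle e he])
  refine ⟨T, ?_⟩
  filter_upwards [eventually_eq_empty hempty, hsmall] with n hn hsmall
  refine ⟨E n, hT n, fun x => ?_, fun e he => ?_⟩
  · obtain ⟨e, he, hx⟩ : ∃ e ∈ H, restr e x ∉ E n e := by
      simpa using Set.eq_empty_iff_forall_notMem.1 hn x
    exact Finset.prod_eq_zero he (Set.indicator_of_notMem hx _)
  · rw [← avg_comp_restr]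
    have h := avg_mul_indicator_compl_le (fun x => (hg n e he (restr e x)).2) (half_pos hε).le
      (restr e ⁻¹' E n e)
    exact h.trans (by linarith [hsmall e he])

/-- The parameter `N` provides both constants of the removal lemma, `δ = 1 / (N + 1)` and
`T = N`, so that counterexamples for all `N` form a sequence with a limit. -/
theorem exists_forall_hasRemoval (hε : 0 < ε) (H : Finset (Finset ι)) :
    ∃ N : ℕ, ∀ (Y : ι → Type) [∀ i, Fintype (Y i)] [∀ i, Nonempty (Y i)] (r : ℕ), 1 ≤ r →
      (∀ e ∈ H, #e = r) → ∀ g : ∀ e : Finset ι, (∀ i : e, Y i) → ℝ,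
      (∀ e ∈ H, ∀ x, 0 ≤ g e x ∧ g e x ≤ 1) →
      avg (fun x : ∀ i, Y i => ∏ e ∈ H, g e (restr e x)) ≤ 1 / ((N : ℝ) + 1) →
      HasRemoval ε N H g := by
  by_contra! hcounter
  choose W _ _ r hr hH g hg havg hno using hcounter
  have hcard : ∀ e ∈ H, #e = r 0 - 1 + 1 := fun e he =>
    (hH 0 e he).trans (Nat.sub_add_cancel (hr 0)).symm
  have hlim : Tendsto (fun n => avg fun x => ∏ e ∈ H, g n e (restr e x)) (hyperfilter ℕ) (𝓝 0) :=
    squeeze_zero (fun n => div_nonneg (Finset.sum_nonneg fun x _ => Finset.prod_nonneg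
      fun e he => (hg n e he _).1) (Nat.cast_nonneg _)) havg
      (tendsto_one_div_add_atTop_nhds_zero_nat.mono_left Nat.hyperfilter_le_atTop)
  obtain ⟨T, hT⟩ := exists_eventually_hasRemoval hcard hg hlim hε
  obtain ⟨n, hn, hTn⟩ := (hT.and (Nat.hyperfilter_le_atTop (eventually_ge_atTop T))).exists
  exact hno n (hn.mono (fun e he => Finset.card_pos.1 (by simp [hcard e he])) hTn)

end Transfer

end HypergraphRemoval

/-- **Weighted hypergraph removal lemma.** For every `ε > 0` and finite `J` there exist
`δ > 0` and `T > 0` such that: for every hypergraph system `(J, (V_j), r, H)` and every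
weighted hypergraph `g` with `0 ≤ g ≤ 1` and `E[∏_{e ∈ H} g_e(x_e)] ≤ δ`, there are sets
`E'_e ⊆ V_e` whose complements have complexity at most `T`, with
`∏_{e ∈ H} 1_{E'_e}(x_e) = 0` for all `x ∈ V_J` and
`E[g_e · 1_{V_e ∖ E'_e}] ≤ ε` for all `e ∈ H`. -/
theorem dense_hypergraph_removal (ε : ℝ) (hε : 0 < ε)
    (J : Type) [Fintype J] [DecidableEq J] :
    ∃ δ : ℝ, 0 < δ ∧ ∃ T : ℕ, 0 < T ∧
    ∀ (V : J → Type) [∀ j, Fintype (V j)] [∀ j, Nonempty (V j)]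
      (r : ℕ), 1 ≤ r → ∀ H : Finset (Finset J), (∀ e ∈ H, e.card = r) →
      ∀ g : (e : Finset J) → ((i : ↥e) → V i) → ℝ,
      (∀ e ∈ H, ∀ x, 0 ≤ g e x ∧ g e x ≤ 1) →
      avg (fun x : (j : J) → V j => ∏ e ∈ H, g e (restr e x)) ≤ δ →
      ∃ E' : (e : Finset J) → Set ((i : ↥e) → V i),
        (∀ e ∈ H, ComplexityLE e (E' e)ᶜ T) ∧
        (∀ x : (j : J) → V j,
          ∏ e ∈ H, Set.indicator (E' e) (fun _ => (1 : ℝ)) (restr e x) = 0) ∧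
        (∀ e ∈ H, avg (fun x : (i : ↥e) → V i =>
          g e x * Set.indicator (E' e)ᶜ (fun _ => (1 : ℝ)) x) ≤ ε) := by
  choose N hN using fun H : Finset (Finset J) => HypergraphRemoval.exists_forall_hasRemoval hε H
  have hM : ∀ H, N H ≤ ∑ H, N H := fun H =>
    Finset.single_le_sum (fun _ _ => Nat.zero_le _) (Finset.mem_univ H)
  refine ⟨1 / ((∑ H, N H : ℕ) + 1), by positivity, (∑ H, N H) + 1, Nat.succ_pos _, ?_⟩
  intro V _ _ r hr H hH g hg havg
  have hδ : 1 / (((∑ H, N H : ℕ) : ℝ) + 1) ≤ 1 / ((N H : ℝ) + 1) := by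
    have := hM H
    gcongr
  exact (hN H V r hr hH g hg (havg.trans hδ)).mono
    (fun e he => Finset.card_pos.1 (by rwa [hH e he])) ((hM H).trans (Nat.le_succ _))
end

section
/- For every ε > 0 and every finite set J, there exists η > 0 such that the following holds. Let V = (J, (V_j)_{j∈J}, r, H) be a hypergraph system and let ν and g be weighted hypergraphs on V with 0 ≤ g_e ≤ ν_e pointwise for all e ∈ H. If ν satisfies the H-linear forms condition within η, then g is upper ε-regular, i.e., for every e ∈ H and all subsets B_f ⊆ V_f (f ∈ ∂e), E[(g_e(x_e) − 1)·∏_{f∈∂e} 1_{B_f}(x_f) | x_e ∈ V_e] ≤ ε. -/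
/-!
Since `g ≤ ν`, it suffices to bound `E[(ν_e - 1) ∏_f 1_{B_f}]`. The factor `1_{B_f}` with
`f = e \ {j}` is bounded by `1` and does not depend on the coordinate `j`, so Cauchy–Schwarz removes
it at the cost of doubling that coordinate. Doing this for every `j ∈ e` bounds the `2 ^ |e|`-th
power of the expectation by the box average `E_{x⁰, x¹} ∏_{ω ∈ {0,1}^e} (ν_e(x^ω) - 1)`. Expanding
this product gives `2 ^ 2 ^ |e|` terms, each `± (1 + O(η))` by the linear forms condition; the main
terms cancel because `∏_ω (1 - 1) = 0`, and an error of at most `2 ^ 2 ^ |e| * η` remains.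
-/

open Finset

variable {J : Type} [Fintype J] [DecidableEq J] {V : J → Type}

open Function
open scoped BigOperators

section Average

variable {R : Type*} [Field R] [LinearOrder R] [IsStrictOrderedRing R]
  {α β : Type*} [Fintype α] [Fintype β]

theorem avg_eq_expect (f : α → ℝ) : avg f = 𝔼 x, f x :=
  (Fintype.expect_eq_sum_div_card f).symm

theorem sq_expect_le_expect_sq (f : α → R) : (𝔼 x, f x) ^ 2 ≤ 𝔼 x, f x ^ 2 := by
  cases isEmpty_or_nonempty α
  · simp
  · simpa using expect_mul_sq_le_sq_mul_sq univ f 1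

theorem pow_expect_le_expect_pow_two_pow (f : α → R) (k : ℕ) :
    (𝔼 x, f x) ^ 2 ^ k ≤ 𝔼 x, f x ^ 2 ^ k := by
  induction k generalizing f with
  | zero => simp
  | succ k ih =>
    calc (𝔼 x, f x) ^ 2 ^ (k + 1) = ((𝔼 x, f x) ^ 2) ^ 2 ^ k := by rw [pow_succ', pow_mul]
      _ ≤ (𝔼 x, f x ^ 2) ^ 2 ^ k :=
        pow_le_pow_left₀ (sq_nonneg _) (sq_expect_le_expect_sq f) _
      _ ≤ 𝔼 x, (f x ^ 2) ^ 2 ^ k := ih _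
      _ = 𝔼 x, f x ^ 2 ^ (k + 1) := by simp only [pow_succ', pow_mul]

theorem sq_expect_mul_le_of_abs_le_one (F : α → β → R) {b : α → R} (hb : ∀ x, |b x| ≤ 1) :
    (𝔼 x, (𝔼 y, F x y) * b x) ^ 2 ≤ 𝔼 y', 𝔼 x, 𝔼 y, F x y * F x y' := by
  calc (𝔼 x, (𝔼 y, F x y) * b x) ^ 2
      ≤ 𝔼 x, ((𝔼 y, F x y) * b x) ^ 2 := sq_expect_le_expect_sq _
    _ ≤ 𝔼 x, (𝔼 y, F x y) ^ 2 := by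
      refine expect_le_expect fun x _ ↦ ?_
      rw [mul_pow]
      exact mul_le_of_le_one_right (sq_nonneg _) ((sq_le_one_iff_abs_le_one _).2 (hb x))
    _ = 𝔼 x, 𝔼 y', 𝔼 y, F x y * F x y' := by simp only [sq, mul_expect, expect_mul]
    _ = 𝔼 y', 𝔼 x, 𝔼 y, F x y * F x y' := expect_comm _ _ _

theorem abs_expect_prod_sub_one_le {κ : Type*} {s : Finset κ} (hs : s.Nonempty) {f : κ → α → R}
    {η : R} (hf : ∀ t ⊆ s, |(𝔼 x, ∏ i ∈ t, f i x) - 1| ≤ η) :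
    |𝔼 x, ∏ i ∈ s, (f i x - 1)| ≤ 2 ^ #s * η := by
  classical
  have hcancel : ∑ t ∈ s.powerset, (-1 : R) ^ #t = 0 :=
    mod_cast sum_powerset_neg_one_pow_card_of_nonempty hs
  have hexpand : 𝔼 x, ∏ i ∈ s, (f i x - 1)
      = ∑ t ∈ s.powerset, (-1) ^ #t * ((𝔼 x, ∏ i ∈ s \ t, f i x) - 1) := by
    simp only [prod_sub, prod_const_one, mul_one, expect_sum_comm, ← mul_expect, mul_sub,
      sum_sub_distrib, hcancel, sub_zero]
  calc |𝔼 x, ∏ i ∈ s, (f i x - 1)|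
      ≤ ∑ t ∈ s.powerset, |(-1) ^ #t * ((𝔼 x, ∏ i ∈ s \ t, f i x) - 1)| :=
        hexpand ▸ abs_sum_le_sum_abs _ _
    _ ≤ ∑ _t ∈ s.powerset, η := by
        refine sum_le_sum fun t _ ↦ ?_
        simpa [abs_mul, abs_pow] using hf (s \ t) sdiff_subset
    _ = 2 ^ #s * η := by simp

end Average

section BoxAverage

variable {M R ι : Type*} [DecidableEq ι] {X : ι → Type*}

theorem prod_powerset_insert_piecewise_update [CommMonoid M] {a : ι} {s : Finset ι}
    (ha : a ∉ s) (h : (∀ i, X i) → M) (x₀ x₁ : ∀ i, X i) (v : X a) :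
    ∏ t ∈ (insert a s).powerset, h (t.piecewise (update x₁ a v) x₀)
      = ∏ t ∈ s.powerset, h (t.piecewise x₁ x₀) * h (update (t.piecewise x₁ x₀) a v) := by
  rw [prod_powerset_insert ha, ← prod_mul_distrib]
  refine prod_congr rfl fun t ht ↦ ?_
  have hpiecewise : t.piecewise (update x₁ a v) x₀ = t.piecewise x₁ x₀ :=
    t.piecewise_congr
      (fun i hi ↦ update_of_ne (ne_of_mem_of_not_mem (mem_powerset.1 ht hi) ha) _ _) fun _ _ ↦ rfl
  rw [piecewise_insert, hpiecewise, update_self]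

variable [Fintype ι] [∀ i, Fintype (X i)]

theorem expect_expect_update [AddCommMonoid M] [Module ℚ≥0 M] (F : (∀ i, X i) → M) (a : ι) :
    𝔼 x, 𝔼 v : X a, F (update x a v) = 𝔼 x, F x := by
  let swap : (∀ i, X i) × X a → (∀ i, X i) × X a := fun p ↦ (update p.1 a p.2, p.1 a)
  have hswap : Involutive swap := fun p ↦ by simp [swap]
  calc 𝔼 x, 𝔼 v : X a, F (update x a v)
      = 𝔼 p : (∀ i, X i) × X a, F (swap p).1 := (expect_product' univ univ _).symm
    _ = 𝔼 p : (∀ i, X i) × X a, F p.1 := Fintype.expect_equiv hswap.toPerm _ _ fun _ ↦ rfl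
    _ = 𝔼 x, 𝔼 _v : X a, F x := expect_product' univ univ fun x _ ↦ F x
    _ = 𝔼 x, F x := by
      refine expect_congr rfl fun x _ ↦ ?_
      have : Nonempty (X a) := ⟨x a⟩
      exact Fintype.expect_const _

section Semiring

variable [CommSemiring R] [Module ℚ≥0 R]

/-- The average of `∏_{ω ∈ {0,1}^s} h(x^ω)` over `x⁰, x¹`: the `2 ^ |s|`-th power of the Gowers box
norm of `h` in the directions `s`. The vertex `ω` of the cube is encoded as the set `t ⊆ s` of
directions in which it equals `1`; the coordinates outside `s` are those of `x⁰`. -/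
def boxAverage (s : Finset ι) (h : (∀ i, X i) → R) : R :=
  𝔼 x₀, 𝔼 x₁, ∏ t ∈ s.powerset, h (t.piecewise x₁ x₀)

theorem boxAverage_empty (h : (∀ i, X i) → R) : boxAverage ∅ h = 𝔼 x, h x := by
  refine expect_congr rfl fun x _ ↦ ?_
  have : Nonempty (∀ i, X i) := ⟨x⟩
  simp

theorem boxAverage_insert {a : ι} {s : Finset ι} (ha : a ∉ s) (h : (∀ i, X i) → R) :
    boxAverage (insert a s) h = 𝔼 v : X a, boxAverage s fun x ↦ h x * h (update x a v) := by
  calc boxAverage (insert a s) h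
      = 𝔼 x₀, 𝔼 x₁, 𝔼 v : X a,
          ∏ t ∈ (insert a s).powerset, h (t.piecewise (update x₁ a v) x₀) :=
        expect_congr rfl fun x₀ _ ↦ (expect_expect_update _ a).symm
    _ = 𝔼 x₀, 𝔼 v : X a, 𝔼 x₁,
          ∏ t ∈ s.powerset, h (t.piecewise x₁ x₀) * h (update (t.piecewise x₁ x₀) a v) := by
        simp only [prod_powerset_insert_piecewise_update ha, expect_comm univ (univ : Finset (X a))]
    _ = 𝔼 v : X a, boxAverage s fun x ↦ h x * h (update x a v) := expect_comm _ _ _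

end Semiring

variable [Field R] [LinearOrder R] [IsStrictOrderedRing R]

theorem sq_expect_mul_le_of_dependsOn_compl (F : (∀ i, X i) → R) {b : (∀ i, X i) → R} {a : ι}
    (hb : ∀ x, |b x| ≤ 1) (hdep : DependsOn b {a}ᶜ) :
    (𝔼 x, F x * b x) ^ 2 ≤ 𝔼 v : X a, 𝔼 x, F x * F (update x a v) := by
  have hbupdate (x : ∀ i, X i) (v : X a) : b (update x a v) = b x :=
    hdep fun i hi ↦ update_of_ne hi _ _
  calc (𝔼 x, F x * b x) ^ 2
      = (𝔼 x, (𝔼 v : X a, F (update x a v)) * b x) ^ 2 := by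
        simp only [← expect_expect_update (fun x ↦ F x * b x) a, hbupdate, expect_mul]
    _ ≤ 𝔼 v : X a, 𝔼 x, 𝔼 w : X a, F (update x a w) * F (update x a v) :=
        sq_expect_mul_le_of_abs_le_one _ hb
    _ = 𝔼 v : X a, 𝔼 x, F x * F (update x a v) := by
        refine expect_congr rfl fun v _ ↦ ?_
        simp only [← expect_expect_update (fun x ↦ F x * F (update x a v)) a, update_idem]

/-- The Gowers–Cauchy–Schwarz inequality. -/
theorem pow_expect_mul_prod_le_boxAverage (s : Finset ι) (h : (∀ i, X i) → R)
    {b : ι → (∀ i, X i) → R} (hb : ∀ j ∈ s, ∀ x, |b j x| ≤ 1)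
    (hdep : ∀ j ∈ s, DependsOn (b j) {j}ᶜ) :
    (𝔼 x, h x * ∏ j ∈ s, b j x) ^ 2 ^ #s ≤ boxAverage s h := by
  induction s using Finset.induction_on generalizing h b with
  | empty => simp [boxAverage_empty]
  | insert a s ha ih =>
    simp only [forall_mem_insert] at hb hdep
    let F (x : ∀ i, X i) : R := h x * ∏ j ∈ s, b j x
    have hslice (v : X a) : (𝔼 x, F x * F (update x a v)) ^ 2 ^ #s
        ≤ boxAverage s fun x ↦ h x * h (update x a v) := by
      have hpair := ih (fun x ↦ h x * h (update x a v)) (b := fun j x ↦ b j x * b j (update x a v))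
        (fun j hj x ↦ by
          rw [abs_mul]
          exact mul_le_one₀ (hb.2 j hj _) (abs_nonneg _) (hb.2 j hj _))
        (fun j hj x y hxy ↦ by
          have hupdate : ∀ i ∈ ({j}ᶜ : Set ι), update x a v i = update y a v i := fun i hi ↦ by
            obtain rfl | hia := eq_or_ne i a <;> simp [*]
          simp only [hdep.2 j hj hxy, hdep.2 j hj hupdate])
      simpa only [F, prod_mul_distrib, mul_mul_mul_comm] using hpair
    calc (𝔼 x, h x * ∏ j ∈ insert a s, b j x) ^ 2 ^ #(insert a s)
        = ((𝔼 x, F x * b a x) ^ 2) ^ 2 ^ #s := by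
          simp only [F, prod_insert ha, card_insert_of_notMem ha, pow_succ', pow_mul,
            mul_left_comm, mul_comm]
      _ ≤ (𝔼 v : X a, 𝔼 x, F x * F (update x a v)) ^ 2 ^ #s :=
          pow_le_pow_left₀ (sq_nonneg _) (sq_expect_mul_le_of_dependsOn_compl F hb.1 hdep.1) _
      _ ≤ 𝔼 v : X a, (𝔼 x, F x * F (update x a v)) ^ 2 ^ #s := pow_expect_le_expect_pow_two_pow _ _
      _ ≤ 𝔼 v : X a, boxAverage s fun x ↦ h x * h (update x a v) :=
          expect_le_expect fun v _ ↦ hslice v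
      _ = boxAverage (insert a s) h := (boxAverage_insert ha h).symm

end BoxAverage

section Edge

variable {M : Type*} {ι : Type} [DecidableEq ι] {X : ι → Type} {e : Finset ι}

theorem faceInd_nonneg {B : (j : ι) → Set ((i : ↥(e.erase j)) → X i)}
    (x : (i : ↥e) → X i) : 0 ≤ faceInd e B x :=
  prod_nonneg fun _ _ ↦ Set.indicator_nonneg (fun _ _ ↦ zero_le_one) _

theorem EdgeUpperRegular.mono [∀ j, Fintype (X j)] {g g' : ((i : ↥e) → X i) → ℝ}
    {ε ε' : ℝ} (h : EdgeUpperRegular e g' ε) (hg : ∀ x, g x ≤ g' x) (hε : ε ≤ ε') :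
    EdgeUpperRegular e g ε' := by
  intro B
  refine le_trans ?_ ((h B).trans hε)
  simp only [avg_eq_expect]
  exact expect_le_expect fun x _ ↦
    mul_le_mul_of_nonneg_right (sub_le_sub_right (hg x) 1) (faceInd_nonneg x)

theorem prod_powerset_restr_piecewise [CommMonoid M] (h : ((i : ↥e) → X i) → M)
    (x₀ x₁ : (j : ι) → X j) :
    ∏ t ∈ e.powerset, h (restr e (t.piecewise x₁ x₀))
      = ∏ ω : ↥e → Bool, h fun i ↦ if ω i then x₁ i else x₀ i := by
  refine prod_bij' (fun t _ i ↦ decide (i.1 ∈ t)) (fun ω _ ↦ {j ∈ e | ∃ hj : j ∈ e, ω ⟨j, hj⟩})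
    ?_ ?_ ?_ ?_ ?_
  · simp
  · simp
  · intro t ht
    ext j
    simpa using fun hj ↦ mem_powerset.1 ht hj
  · intro ω _
    ext i
    simp
  · intro t _
    congr
    ext i
    simp [restr, piecewise]

end Edge

section Hypergraph

variable {e : Finset J} [∀ j, Fintype (V j)]

theorem expect_comp_restr {M : Type*} [AddCommMonoid M] [Module ℚ≥0 M] [∀ j, Nonempty (V j)]
    (F : ((i : ↥e) → V i) → M) :
    𝔼 x : (j : J) → V j, F (restr e x) = 𝔼 x, F x := by
  calc 𝔼 x : (j : J) → V j, F (restr e x)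
      = 𝔼 p : ((i : {j // j ∈ e}) → V i) × ((i : {j // j ∉ e}) → V i), F p.1 :=
        Fintype.expect_equiv (Equiv.piEquivPiSubtypeProd (· ∈ e) V) _ _ fun _ ↦ rfl
    _ = 𝔼 x, 𝔼 _y : (i : {j // j ∉ e}) → V i, F x := expect_product' univ univ fun x _ ↦ F x
    _ = 𝔼 x, F x := by simp

theorem pow_avg_mul_faceInd_le_boxAverage [∀ j, Nonempty (V j)]
    (h : ((i : ↥e) → V i) → ℝ) (B : (j : J) → Set ((i : ↥(e.erase j)) → V i)) :
    avg (fun x ↦ h x * faceInd e B x) ^ 2 ^ #e ≤ boxAverage e fun x ↦ h (restr e x) := by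
  rw [avg_eq_expect, ← expect_comp_restr]
  refine pow_expect_mul_prod_le_boxAverage e _ (fun j _ x ↦ ?_) fun j _ x y hxy ↦ ?_
  · by_cases hx : faceProj j (restr e x) ∈ B j <;> simp [hx]
  · have hface : faceProj j (restr e x) = faceProj j (restr e y) :=
      funext fun i ↦ hxy i (ne_of_mem_erase i.2)
    rw [hface]

namespace HLinearForms

variable {H : Finset (Finset J)} {ν : (e : Finset J) → ((i : ↥e) → V i) → ℝ} {η : ℝ}

theorem mono {η' : ℝ} (hν : HLinearForms H ν η) (hη : η ≤ η') : HLinearForms H ν η' :=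
  fun n ↦ (hν n).trans hη

theorem abs_expect_prod_weight_sub_one_le (hν : HLinearForms H ν η) (he : e ∈ H)
    (T : Finset (↥e → Bool)) :
    |(𝔼 x : ((j : J) → V j) × ((j : J) → V j),
      ∏ ω ∈ T, ν e fun i ↦ if ω i then x.2 i else x.1 i) - 1| ≤ η := by
  let n : (e' : Finset J) → (↥e' → Bool) → Bool :=
    update (fun _ _ ↦ false) e fun ω ↦ decide (ω ∈ T)
  have hprod (x : ((j : J) → V j) × ((j : J) → V j)) :
      (∏ e' ∈ H, ∏ ω : ↥e' → Bool,
        if n e' ω then ν e' (fun i ↦ if ω i then x.2 i else x.1 i) else 1)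
        = ∏ ω ∈ T, ν e fun i ↦ if ω i then x.2 i else x.1 i := by
    rw [prod_eq_single_of_mem e he fun e' _ hne ↦ by simp [n, hne]]
    simp [n]
  simpa only [avg_eq_expect, hprod] using hν n

theorem boxAverage_sub_one_le (hν : HLinearForms H ν η) (he : e ∈ H) :
    boxAverage e (fun x ↦ ν e (restr e x) - 1) ≤ 2 ^ 2 ^ #e * η := by
  calc boxAverage e (fun x ↦ ν e (restr e x) - 1)
      = 𝔼 x : ((j : J) → V j) × ((j : J) → V j),
          ∏ ω : ↥e → Bool, (ν e (fun i ↦ if ω i then x.2 i else x.1 i) - 1) := by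
        simp only [boxAverage, prod_powerset_restr_piecewise fun y ↦ ν e y - 1]
        exact (expect_product' univ univ _).symm
    _ ≤ 2 ^ #(univ : Finset (↥e → Bool)) * η :=
        (le_abs_self _).trans <| abs_expect_prod_sub_one_le univ_nonempty fun T _ ↦
          hν.abs_expect_prod_weight_sub_one_le he T
    _ = 2 ^ 2 ^ #e * η := by simp

theorem edgeUpperRegular [∀ j, Nonempty (V j)] {δ : ℝ} (hδ : 0 ≤ δ)
    (hν : HLinearForms H ν (δ ^ 2 ^ #e)) (he : e ∈ H) : EdgeUpperRegular e (ν e) (2 * δ) := by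
  intro B
  refine le_of_pow_le_pow_left₀ (n := 2 ^ #e) (by positivity) (by positivity) ?_
  calc avg (fun x ↦ (ν e x - 1) * faceInd e B x) ^ 2 ^ #e
      ≤ boxAverage e fun x ↦ ν e (restr e x) - 1 := pow_avg_mul_faceInd_le_boxAverage _ B
    _ ≤ 2 ^ 2 ^ #e * δ ^ 2 ^ #e := hν.boxAverage_sub_one_le he
    _ = (2 * δ) ^ 2 ^ #e := (mul_pow _ _ _).symm

end HLinearForms

end Hypergraph

theorem upper_regular_of_linear_forms_general (ε : ℝ) (hε : 0 < ε)
    (J : Type) [Fintype J] [DecidableEq J] :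
    ∃ η : ℝ, 0 < η ∧
    ∀ (V : J → Type) [∀ j, Fintype (V j)] [∀ j, Nonempty (V j)] (H : Finset (Finset J))
      (ν g : (e : Finset J) → ((i : ↥e) → V i) → ℝ),
      (∀ e ∈ H, ∀ x, g e x ≤ ν e x) → HLinearForms H ν η →
      ∀ e ∈ H, EdgeUpperRegular e (g e) ε := by
  -- Capping `δ` at `1` lets a single `η` serve the edges of every size `≤ |J|`.
  let δ := min 1 (ε / 2)
  have hδ : 0 < δ := lt_min one_pos (half_pos hε)
  have hδε : 2 * δ ≤ ε := by linarith [min_le_right 1 (ε / 2)]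
  refine ⟨δ ^ 2 ^ Fintype.card J, by positivity, fun V _ _ H ν g hg hν e he ↦ ?_⟩
  have hη : δ ^ 2 ^ Fintype.card J ≤ δ ^ 2 ^ #e :=
    pow_le_pow_of_le_one hδ.le (min_le_left _ _)
      (Nat.pow_le_pow_right two_pos (card_le_univ e))
  exact ((hν.mono hη).edgeUpperRegular hδ.le he).mono (hg e he) hδε

/-- For every `ε > 0` and finite `J` there exists `η > 0` such that: for every
hypergraph system `(J, (V_j), r, H)` and weighted hypergraphs `ν, g` with `0 ≤ g ≤ ν`,
if `ν` satisfies the `H`-linear forms condition within `η` then `g` is upper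
`ε`-regular, i.e. for every `e ∈ H` and all `B_f ⊆ V_f` (`f ∈ ∂e`),
`E[(g_e(x_e) - 1) ∏_{f ∈ ∂e} 1_{B_f}(x_f)] ≤ ε`. -/
theorem upper_regular_of_linear_forms (ε : ℝ) (hε : 0 < ε)
    (J : Type) [Fintype J] [DecidableEq J] :
    ∃ η : ℝ, 0 < η ∧
    ∀ (V : J → Type) [∀ j, Fintype (V j)] [∀ j, Nonempty (V j)]
      (r : ℕ), 1 ≤ r → ∀ H : Finset (Finset J), (∀ e ∈ H, e.card = r) →
      ∀ ν g : (e : Finset J) → ((i : ↥e) → V i) → ℝ,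
      (∀ e ∈ H, ∀ x, 0 ≤ g e x ∧ g e x ≤ ν e x) →
      HLinearForms H ν η →
      ∀ e ∈ H, EdgeUpperRegular e (g e) ε := by
  obtain ⟨η, hη, h⟩ := upper_regular_of_linear_forms_general ε hε J
  exact ⟨η, hη, fun V _ _ _ _ H _ ν g hg ↦ h V H ν g fun e he x ↦ (hg e he x).2⟩
end
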